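/- For every integer m ≥ 4 there exists a finite planar ({3,m};5)-graph on 6m+2 vertices, and every finite planar ({3,m};5)-graph has at least 3m+11 vertices; hence 3m+11 ≤ n_p({3,m};5) ≤ 6m+2. -/

import Mathlib

open SimpleGraph

/-- `H` is a minor of `G`: there is an assignment of pairwise disjoint connected
branch sets in `G` to the vertices of `H`, with an edge of `G` between the branch
sets of any two adjacent vertices of `H`. -/
def SimpleGraph.IsMinorOf {W V : Type*} (H : SimpleGraph W) (G : SimpleGraph V) : Prop :=
  ∃ f : W → Set V,
    (∀ w, (G.induce (f w)).Connected) ∧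
    (Pairwise fun w₁ w₂ => Disjoint (f w₁) (f w₂)) ∧
    ∀ ⦃w₁ w₂⦄, H.Adj w₁ w₂ → ∃ v₁ ∈ f w₁, ∃ v₂ ∈ f w₂, G.Adj v₁ v₂

/-- A graph is planar iff it has no `K₅` minor and no `K₃,₃` minor (Wagner's theorem). -/
def SimpleGraph.IsPlanar {V : Type*} (G : SimpleGraph V) : Prop :=
  ¬ (completeGraph (Fin 5)).IsMinorOf G ∧
    ¬ (completeBipartiteGraph (Fin 3) (Fin 3)).IsMinorOf G

/-- A graph is outerplanar iff it has no `K₄` minor and no `K₂,₃` minor. -/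
def SimpleGraph.IsOuterplanar {V : Type*} (G : SimpleGraph V) : Prop :=
  ¬ (completeGraph (Fin 4)).IsMinorOf G ∧
    ¬ (completeBipartiteGraph (Fin 2) (Fin 3)).IsMinorOf G

/-- The degree of a vertex, as the cardinality of its neighbour set. -/
noncomputable def SimpleGraph.degN {V : Type*} (G : SimpleGraph V) (v : V) : ℕ :=
  (G.neighborSet v).ncard

/-- An `({r,m};g)`-graph: girth `g`, every vertex has degree `r` or `m`, both occur. -/
def IsBigirthGraph {V : Type*} (G : SimpleGraph V) (r m g : ℕ) : Prop :=
  G.girth = g ∧ (∀ v, G.degN v = r ∨ G.degN v = m) ∧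
    (∃ v, G.degN v = r) ∧ (∃ v, G.degN v = m)

/-- The set of orders of finite planar `({r,m};g)`-graphs. -/
def bicageOrders (r m g : ℕ) : Set ℕ :=
  {n | ∃ (V : Type) (_ : Fintype V) (G : SimpleGraph V),
    G.IsPlanar ∧ IsBigirthGraph G r m g ∧ Fintype.card V = n}

/-!
A graph satisfies MacLane's criterion if its cycle space modulo `2` is spanned by cycles that cover
each edge at most twice. The criterion is inherited by minors, and together with a girth `g` it
gives Euler's inequality `g * (E - V + 2) ≤ 2 * E`, which `K₅` and `K₃,₃` violate; hence it implies
planarity.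

For the converse, a planar graph with a cut of at most two vertices is glued from two smaller planar
graphs. Otherwise, as in Thomassen's proof of Kuratowski's theorem, some edge `x y` has ends that
lie in no cut of three vertices. Contracting it keeps the graph planar, and the faces around the
contracted vertex yield a cycle through all neighbours of `x` and `y`. On this cycle the two sets of
neighbours lie on arcs that share only their ends, so that `x` and `y` can be reinserted, for
otherwise there is a `K₃,₃` or a `K₅` minor.

The lower bound combines Euler's inequality `5 * (E - V + 2) ≤ 2 * E` with the degree sum
`2 * E ≥ 3 * V + m - 3`. For the upper bound, the pentagonal faces of a cyclically symmetric graph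
with two hubs verify MacLane's criterion.
-/

namespace PlanarCage

open Finset

/-! ### Edge chains and cycles modulo two -/

section CycleSpace

variable {V : Type*} {G H : SimpleGraph V} {z : Sym2 V → ZMod 2} {u v : V}

lemma eq_one_of_ne_zero {a : ZMod 2} (ha : a ≠ 0) : a = 1 := Fin.eq_one_of_ne_zero a ha

lemma chain_add_self {α : Type*} (x : α → ZMod 2) : x + x = 0 :=
  funext fun _ => CharTwo.add_self_eq_zero _

/-- The chains supported on the edges of `G`. -/
def edgeSpace (G : SimpleGraph V) : Submodule (ZMod 2) (Sym2 V → ZMod 2) where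
  carrier := {z | ∀ e ∉ G.edgeSet, z e = 0}
  zero_mem' _ _ := rfl
  add_mem' hy hz e he := by rw [Pi.add_apply, hy e he, hz e he, add_zero]
  smul_mem' a z hz e he := by rw [Pi.smul_apply, hz e he, smul_zero]

lemma mem_edgeSet_of_mem_edgeSpace (hz : z ∈ edgeSpace G) {e : Sym2 V} (he : z e ≠ 0) :
    e ∈ G.edgeSet :=
  not_imp_comm.1 (hz e) he

lemma edgeSpace_mono (h : G ≤ H) : edgeSpace G ≤ edgeSpace H :=
  fun _ hz e he => hz e fun hG => he (edgeSet_mono h hG)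

section DecEq

variable [DecidableEq V]

lemma single_mem_edgeSpace {e : Sym2 V} (he : e ∈ G.edgeSet) :
    (Pi.single e 1 : Sym2 V → ZMod 2) ∈ edgeSpace G :=
  fun _ hf => Pi.single_eq_of_ne (by rintro rfl; exact hf he) _

/-- The sum of the edges traversed by a walk. -/
def walkChain (p : G.Walk u v) : Sym2 V → ZMod 2 := (p.edges.map fun e => Pi.single e 1).sum

lemma walkChain_cons {w : V} (h : G.Adj u v) (p : G.Walk v w) :
    walkChain (.cons h p) = Pi.single s(u, v) 1 + walkChain p := by
  simp only [walkChain, Walk.edges_cons, List.map_cons, List.sum_cons]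

lemma walkChain_mem_edgeSpace (p : G.Walk u v) : walkChain p ∈ edgeSpace G := by
  refine list_sum_mem fun z hz => ?_
  obtain ⟨e, he, rfl⟩ := List.mem_map.1 hz
  exact single_mem_edgeSpace (p.edges_subset_edgeSet he)

lemma walkChain_apply (p : G.Walk u v) (e : Sym2 V) : walkChain p e = p.edges.count e := by
  rw [walkChain]
  induction p.edges with
  | nil => rfl
  | cons f l ih =>
    rw [List.map_cons, List.sum_cons, Pi.add_apply, ih, List.count_cons, Nat.cast_add, add_comm]
    by_cases h : f = e <;> simp [h, Ne.symm]

lemma walkChain_apply_of_isTrail {p : G.Walk u v} (hp : p.IsTrail) (e : Sym2 V) :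
    walkChain p e = if e ∈ p.edges then 1 else 0 := by
  rw [walkChain_apply]
  split_ifs with he
  · rw [List.count_eq_one_of_mem hp.edges_nodup he, Nat.cast_one]
  · rw [List.count_eq_zero.2 he, Nat.cast_zero]

lemma card_incident_eq (A : Finset V) (h : u ≠ v) :
    (#{w ∈ A | w ∈ s(u, v)} : ZMod 2) = if u ∈ A ↔ v ∈ A then 0 else 1 := by
  have hsplit : {w ∈ A | w ∈ s(u, v)} = A ∩ {u, v} := by
    ext w
    simp only [mem_filter, mem_inter, mem_insert, mem_singleton, Sym2.mem_iff]
  rw [hsplit]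
  by_cases hu : u ∈ A
  · by_cases hv : v ∈ A
    · simp [hu, hv, inter_insert_of_mem, h]
      rfl
    · simp [hu, hv, inter_insert_of_mem]
  · by_cases hv : v ∈ A <;> simp [hu, hv, inter_insert_of_notMem]

end DecEq

variable [Fintype V] [DecidableEq V]

/-- The boundary map from edge chains modulo `2` to vertex chains modulo `2`. Chains live on all of
`Sym2 V`, so that the chains of different graphs on `V` can be added. -/
def boundary (V : Type*) [Fintype V] [DecidableEq V] :
    (Sym2 V → ZMod 2) →ₗ[ZMod 2] (V → ZMod 2) where
  toFun z v := ∑ e with v ∈ e, z e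
  map_add' y z := funext fun v => by simp only [Pi.add_apply, sum_add_distrib]
  map_smul' a z := funext fun v => by simp only [Pi.smul_apply, smul_sum, RingHom.id_apply]

/-- The cycle space of `G` over the field with two elements. -/
def cycleSpace (G : SimpleGraph V) : Submodule (ZMod 2) (Sym2 V → ZMod 2) :=
  edgeSpace G ⊓ LinearMap.ker (boundary V)

lemma boundary_apply (z : Sym2 V → ZMod 2) (v : V) : boundary V z v = ∑ e with v ∈ e, z e := rfl

lemma cycleSpace_mono (h : G ≤ H) : cycleSpace G ≤ cycleSpace H :=
  inf_le_inf_right _ (edgeSpace_mono h)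

lemma boundary_eq_zero_of_notMem_support (hz : z ∈ edgeSpace G) (hv : v ∉ G.support) :
    boundary V z v = 0 := by
  refine sum_eq_zero fun e he => hz e fun heG => hv ?_
  obtain ⟨w, rfl⟩ := (mem_filter_univ _).1 he
  exact ⟨w, heG⟩

lemma boundary_single (h : u ≠ v) :
    boundary V (Pi.single s(u, v) 1) = Pi.single u 1 + Pi.single v 1 := by
  funext w
  have hmem : boundary V (Pi.single s(u, v) 1) w = if w ∈ s(u, v) then 1 else 0 := by
    simp only [boundary_apply, Pi.single_apply, sum_ite_eq', mem_filter, mem_univ, true_and]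
  simp only [hmem, Pi.add_apply, Pi.single_apply, Sym2.mem_iff]
  by_cases hu : w = u
  · subst hu
    simp [h]
  · simp [hu]

lemma sum_boundary (A : Finset V) (z : Sym2 V → ZMod 2) :
    ∑ v ∈ A, boundary V z v = ∑ e, (#{v ∈ A | v ∈ e} : ZMod 2) * z e := by
  simp only [boundary_apply, sum_filter, card_filter, Nat.cast_sum, sum_mul]
  rw [sum_comm]
  refine sum_congr rfl fun e _ => sum_congr rfl fun v _ => ?_
  split_ifs <;> simp

lemma sum_boundary_eq_zero (hz : z ∈ edgeSpace G) : ∑ v, boundary V z v = 0 := by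
  rw [sum_boundary]
  refine sum_eq_zero fun e _ => ?_
  by_cases he : e ∈ G.edgeSet
  · induction e with | _ a b =>
    rw [card_incident_eq univ (G.ne_of_adj he), if_pos (by simp only [mem_univ]), zero_mul]
  · rw [hz e he, mul_zero]

lemma boundary_walkChain (p : G.Walk u v) :
    boundary V (walkChain p) = Pi.single u 1 + Pi.single v 1 := by
  induction p with
  | nil => simp only [walkChain, Walk.edges_nil, List.map_nil, List.sum_nil, map_zero,
      chain_add_self]
  | @cons u v w h p ih =>
    rw [walkChain_cons, map_add, boundary_single h.ne, ih, add_assoc,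
      ← add_assoc (Pi.single v 1), chain_add_self, zero_add]

lemma walkChain_mem_cycleSpace (p : G.Walk u u) : walkChain p ∈ cycleSpace G :=
  ⟨walkChain_mem_edgeSpace p, by
    exact LinearMap.mem_ker.2 (by rw [boundary_walkChain, chain_add_self])⟩

-- Connect each vertex to a fixed base point of `A`; the base point contributions cancel.
lemma exists_boundary_eq {A : Set V} (hA : ∀ u ∈ A, ∀ v ∈ A, G.Reachable u v) {β : V → ZMod 2}
    (hβ : ∀ v ∉ A, β v = 0) (h0 : ∑ v, β v = 0) : ∃ z ∈ edgeSpace G, boundary V z = β := by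
  rcases A.eq_empty_or_nonempty with rfl | ⟨o, ho⟩
  · exact ⟨0, zero_mem _, by rw [map_zero]; exact funext fun v => (hβ v id).symm⟩
  have hpath (v : V) : ∃ z ∈ edgeSpace G, v ∈ A → boundary V z = Pi.single v 1 + Pi.single o 1 := by
    by_cases hv : v ∈ A
    · obtain ⟨p⟩ := hA v hv o ho
      exact ⟨walkChain p, walkChain_mem_edgeSpace p, fun _ => boundary_walkChain p⟩
    · exact ⟨0, zero_mem _, fun h => absurd h hv⟩
  choose y hy hyv using hpath
  refine ⟨∑ v, β v • y v, sum_mem fun v _ => Submodule.smul_mem _ _ (hy v), ?_⟩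
  have hterm (v : V) : boundary V (β v • y v) = β v • Pi.single v 1 + β v • Pi.single o 1 := by
    by_cases hv : v ∈ A
    · rw [map_smul, hyv v hv, smul_add]
    · simp only [hβ v hv, zero_smul, map_zero, add_zero]
  have hsum : ∑ v, β v • (Pi.single v 1 : V → ZMod 2) = β := by
    funext w
    simp only [Finset.sum_apply, Pi.smul_apply, smul_eq_mul, Pi.single_apply, mul_ite, mul_one,
      mul_zero, sum_ite_eq, mem_univ, if_true]
  rw [map_sum, sum_congr rfl fun v _ => hterm v, sum_add_distrib, hsum, ← sum_smul, h0, zero_smul,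
    add_zero]

-- An edge in the support that is a bridge of the support is the only edge of the support leaving
-- its side, so the boundary cannot vanish there.
lemma exists_isCycle_of_mem_cycleSpace (hz : z ∈ cycleSpace G) (h0 : z ≠ 0) :
    ∃ (a : V) (C : G.Walk a a), C.IsCycle ∧ ∀ e ∈ C.edges, z e ≠ 0 := by
  classical
  set K := fromEdgeSet {e | z e ≠ 0} with hK
  have hK_edge {e : Sym2 V} : e ∈ K.edgeSet ↔ z e ≠ 0 := by
    rw [hK, edgeSet_fromEdgeSet]
    exact ⟨fun h => h.1, fun h => ⟨h, fun hd => G.not_isDiag_of_mem_edgeSet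
      (mem_edgeSet_of_mem_edgeSpace hz.1 h) hd⟩⟩
  have hKG : K ≤ G := edgeSet_subset_edgeSet.1 fun e he =>
    mem_edgeSet_of_mem_edgeSpace hz.1 (hK_edge.1 he)
  suffices hcyc : ¬K.IsAcyclic by
    simp only [IsAcyclic, not_forall, not_not] at hcyc
    obtain ⟨a, C, hC⟩ := hcyc
    exact ⟨a, C.mapLe hKG, hC.mapLe hKG, fun e he =>
      hK_edge.1 (C.edges_subset_edgeSet (by simpa using he))⟩
  intro hac
  obtain ⟨e, he⟩ := Function.ne_iff.1 h0
  induction e with | _ a b =>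
  have hab : K.Adj a b := hK_edge.2 he
  have hbridge := isBridge_iff.1 (isAcyclic_iff_forall_adj_isBridge.1 hac hab)
  set A : Finset V := {v | (K.deleteEdges {s(a, b)}).Reachable a v} with hA
  have hmem (v : V) : v ∈ A ↔ (K.deleteEdges {s(a, b)}).Reachable a v := by
    rw [hA, mem_filter_univ]
  have hother : ∀ f ≠ s(a, b), (#{v ∈ A | v ∈ f} : ZMod 2) * z f = 0 := fun f hf => by
    by_cases hzf : z f = 0
    · rw [hzf, mul_zero]
    induction f with | _ c d =>
    have hcd : K.Adj c d := hK_edge.2 hzf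
    have hadj : (K.deleteEdges {s(a, b)}).Adj c d :=
      deleteEdges_adj.2 ⟨hcd, hf⟩
    rw [card_incident_eq A hcd.ne, if_pos, zero_mul]
    rw [hmem, hmem]
    exact ⟨fun h => h.trans hadj.reachable, fun h => h.trans hadj.symm.reachable⟩
  have hsum : ∑ v ∈ A, boundary V z v = z s(a, b) := by
    rw [sum_boundary, sum_eq_single s(a, b) (fun f _ hf => hother f hf) (by simp),
      card_incident_eq A hab.ne, if_neg, one_mul]
    rw [hmem, hmem]
    exact fun h => hbridge (h.1 (Reachable.refl a))
  exact he (hsum ▸ sum_eq_zero fun v _ => congrFun (LinearMap.mem_ker.1 hz.2) v)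

end CycleSpace

/-! ### Cycle covers and MacLane's criterion -/

section CycleCover

lemma mem_edgeSet_sup_edge {V : Type*} {G : SimpleGraph V} {e : Sym2 V} {u v : V} (huv : u ≠ v) :
    e ∈ (G ⊔ edge u v).edgeSet ↔ e ∈ G.edgeSet ∨ e = s(u, v) := by
  rw [edgeSet_sup, edgeSet_edge_of_ne huv, Set.mem_union, Set.mem_singleton_iff]

lemma sum_apply_eq_card {V ι : Type*} (c : ι → Sym2 V → ZMod 2) (S : Finset ι) (e : Sym2 V) :
    (∑ i ∈ S, c i) e = #{i ∈ S | c i e ≠ 0} := by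
  rw [Finset.sum_apply, card_filter, Nat.cast_sum]
  refine sum_congr rfl fun i _ => ?_
  generalize c i e = a
  decide +revert

section Coverage

variable {V ι κ : Type*} [Fintype ι] [Fintype κ]

/-- The number of members of a family of chains that contain the edge `e`. -/
def coverage (c : ι → Sym2 V → ZMod 2) (e : Sym2 V) : ℕ := #{i | c i e ≠ 0}

lemma coverage_comp_le {f : κ → ι} (hf : f.Injective) (c : ι → Sym2 V → ZMod 2) (e : Sym2 V) :
    coverage (c ∘ f) e ≤ coverage c e :=
  card_le_card_of_injOn f (by simp [Set.MapsTo]) hf.injOn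

lemma coverage_sumElim (c : ι → Sym2 V → ZMod 2) (d : κ → Sym2 V → ZMod 2) (e : Sym2 V) :
    coverage (Sum.elim c d) e = coverage c e + coverage d e := by
  simp only [coverage, card_filter]
  exact Fintype.sum_sum_type _

lemma coverage_optionElim (z : Sym2 V → ZMod 2) (c : ι → Sym2 V → ZMod 2) (e : Sym2 V) :
    coverage (fun o : Option ι => o.elim z c) e = (if z e ≠ 0 then 1 else 0) + coverage c e := by
  simp only [coverage, card_filter]
  exact Fintype.sum_option _

lemma sum_apply_eq_coverage (c : ι → Sym2 V → ZMod 2) (e : Sym2 V) :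
    (∑ i, c i) e = coverage c e :=
  sum_apply_eq_card c univ e

lemma sum_apply_ne_zero {c : ι → Sym2 V → ZMod 2} {S : Finset ι} {i j : ι} {e : Sym2 V}
    (h2 : coverage c e ≤ 2) (hi : c i e ≠ 0) (hj : c j e ≠ 0) (hiS : i ∈ S) (hjS : j ∉ S) :
    (∑ k ∈ S, c k) e ≠ 0 := by
  have hpos : 0 < #{k ∈ S | c k e ≠ 0} := card_pos.2 ⟨i, mem_filter.2 ⟨hiS, hi⟩⟩
  have hlt : #{k ∈ S | c k e ≠ 0} < coverage c e :=
    card_lt_card ⟨filter_subset_filter _ (subset_univ S), fun h =>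
      hjS (mem_filter.1 (h ((mem_filter_univ j).2 hj))).1⟩
  rw [sum_apply_eq_card, show #{k ∈ S | c k e ≠ 0} = 1 by omega, Nat.cast_one]
  exact one_ne_zero

lemma span_range_optionElim {ι : Type*} (z : Sym2 V → ZMod 2) (c : ι → Sym2 V → ZMod 2) :
    Submodule.span (ZMod 2) (Set.range fun o : Option ι => o.elim z c) =
      Submodule.span (ZMod 2) {z} ⊔ Submodule.span (ZMod 2) (Set.range c) := by
  rw [← Submodule.span_insert]
  congr 1
  ext w
  simp [Option.exists, eq_comm]

end Coverage

variable {V : Type*} [Fintype V] [DecidableEq V] {G H : SimpleGraph V} {k l : Sym2 V → ℕ}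
  {e : Sym2 V} {z : Sym2 V → ZMod 2} {u v : V}

/-- The cycle space of `G` is spanned by a finite family of chains that contains each edge `e` at
most `k e` times. -/
def HasCycleCover (G : SimpleGraph V) (k : Sym2 V → ℕ) : Prop :=
  ∃ (ι : Type) (_ : Fintype ι) (c : ι → Sym2 V → ZMod 2),
    Submodule.span (ZMod 2) (Set.range c) = cycleSpace G ∧ ∀ e, coverage c e ≤ k e

/-- MacLane's planarity criterion: the cycle space is spanned by cycles covering each edge at most
twice. -/
def IsMacLane (G : SimpleGraph V) : Prop := HasCycleCover G fun _ => 2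

/-- A family of chains that behaves like the face boundaries of a plane graph: it spans the cycle
space, covers each edge at most twice and sums to zero. -/
structure IsFaceSystem (G : SimpleGraph V) {ι : Type*} [Fintype ι] (c : ι → Sym2 V → ZMod 2) :
    Prop where
  span_eq : Submodule.span (ZMod 2) (Set.range c) = cycleSpace G
  coverage_le (e : Sym2 V) : coverage c e ≤ 2
  sum_eq_zero : ∑ i, c i = 0

lemma coverage_eq_zero {ι : Type*} [Fintype ι] {c : ι → Sym2 V → ZMod 2}
    (hc : Submodule.span (ZMod 2) (Set.range c) = cycleSpace G) (he : e ∉ G.edgeSet) :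
    coverage c e = 0 := by
  refine card_eq_zero.2 (filter_eq_empty_iff.2 fun i _ => not_not.2 ?_)
  exact (hc ▸ Submodule.subset_span ⟨i, rfl⟩ : c i ∈ cycleSpace G).1 e he

lemma exists_eq_sum {ι : Type*} {c : ι → Sym2 V → ZMod 2}
    (hc : Submodule.span (ZMod 2) (Set.range c) = cycleSpace G) (hz : z ∈ cycleSpace G) :
    ∃ S : Finset ι, z = ∑ i ∈ S, c i := by
  obtain ⟨a, rfl⟩ := Finsupp.mem_span_range_iff_exists_finsupp.1 (hc ▸ hz)
  refine ⟨a.support, sum_congr rfl fun i hi => ?_⟩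
  beta_reduce
  rw [eq_one_of_ne_zero (Finsupp.mem_support_iff.1 hi), one_smul]

lemma HasCycleCover.mono (h : HasCycleCover G k) (hkl : ∀ e ∈ G.edgeSet, k e ≤ l e) :
    HasCycleCover G l := by
  obtain ⟨ι, _, c, hc, hk⟩ := h
  refine ⟨ι, inferInstance, c, hc, fun e => ?_⟩
  by_cases he : e ∈ G.edgeSet
  · exact (hk e).trans (hkl e he)
  · exact (coverage_eq_zero hc he).trans_le (Nat.zero_le _)

lemma HasCycleCover.congr (h : HasCycleCover G k) (hGH : cycleSpace H = cycleSpace G) :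
    HasCycleCover H k := by
  rwa [HasCycleCover, hGH]

lemma HasCycleCover.adjoin (h : HasCycleCover G k)
    (hGH : cycleSpace H = cycleSpace G ⊔ Submodule.span (ZMod 2) {z}) :
    HasCycleCover H fun e => (if z e ≠ 0 then 1 else 0) + k e := by
  obtain ⟨ι, _, c, hc, hk⟩ := h
  refine ⟨Option ι, inferInstance, fun o => o.elim z c, ?_, fun e => ?_⟩
  · rw [span_range_optionElim, hc, hGH, sup_comm]
  · exact (coverage_optionElim z c e).trans_le (Nat.add_le_add_left (hk e) _)

-- Adding the sum of all members covers the edges that were covered once a second time.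
lemma IsMacLane.exists_isFaceSystem (h : IsMacLane G) :
    ∃ (ι : Type) (_ : Fintype ι) (c : ι → Sym2 V → ZMod 2), IsFaceSystem G c := by
  obtain ⟨ι, _, c, hc, h2⟩ := h
  refine ⟨Option ι, inferInstance, fun o => o.elim (∑ i, c i) c, ?_, fun e => ?_, ?_⟩
  · rw [span_range_optionElim, sup_eq_right.2, hc]
    exact (Submodule.span_singleton_le_iff_mem _ _).2
      (sum_mem fun i _ => Submodule.subset_span ⟨i, rfl⟩)
  · rw [coverage_optionElim, sum_apply_eq_coverage]
    have := h2 e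
    interval_cases coverage c e <;> simp
    rfl
  · rw [Fintype.sum_option, Option.elim_none]
    exact chain_add_self _

namespace IsFaceSystem

variable {ι : Type*} [Fintype ι] {c : ι → Sym2 V → ZMod 2}

lemma mem_cycleSpace (hc : IsFaceSystem G c) (i : ι) : c i ∈ cycleSpace G :=
  hc.span_eq ▸ Submodule.subset_span ⟨i, rfl⟩

lemma sum_compl [DecidableEq ι] (hc : IsFaceSystem G c) (S : Finset ι) :
    ∑ i ∈ Sᶜ, c i = ∑ i ∈ S, c i := by
  have h := hc.sum_eq_zero
  rw [← sum_add_sum_compl S] at h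
  exact add_left_cancel (h.trans (chain_add_self _).symm)

lemma coverage_eq_two (hc : IsFaceSystem G c) {i : ι} (hi : c i e ≠ 0) : coverage c e = 2 := by
  have hpos : 0 < coverage c e := card_pos.2 ⟨i, by simpa using hi⟩
  have hle := hc.coverage_le e
  have hpar : (coverage c e : ZMod 2) = 0 := by
    rw [← sum_apply_eq_coverage, hc.sum_eq_zero, Pi.zero_apply]
  have h1 : coverage c e ≠ 1 := fun h => by simp [h] at hpar
  omega

lemma exists_other (hc : IsFaceSystem G c) {i : ι} (hi : c i e ≠ 0) :
    ∃ j ≠ i, c j e ≠ 0 ∧ ∀ k, c k e ≠ 0 → k = i ∨ k = j := by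
  classical
  obtain ⟨a, b, hab, hset⟩ := card_eq_two.1 (hc.coverage_eq_two hi)
  have hmem (k : ι) : c k e ≠ 0 ↔ k = a ∨ k = b := by
    rw [← mem_filter_univ (p := fun i => c i e ≠ 0), hset, mem_insert, mem_singleton]
  rcases (hmem i).1 hi with rfl | rfl
  · exact ⟨b, hab.symm, (hmem b).2 (Or.inr rfl), fun k hk => (hmem k).1 hk⟩
  · exact ⟨a, hab, (hmem a).2 (Or.inl rfl), fun k hk => ((hmem k).1 hk).symm⟩

end IsFaceSystem

lemma IsMacLane.hasCycleCover_ite (h : IsMacLane G) (e : Sym2 V) :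
    HasCycleCover G fun f => if f = e then 1 else 2 := by
  classical
  obtain ⟨ι, _, c, hc⟩ := h.exists_isFaceSystem
  by_cases! hi : ∃ i, c i e ≠ 0
  · obtain ⟨i, hi⟩ := hi
    have hspan :
        Submodule.span (ZMod 2) (Set.range fun j : {j // j ≠ i} => c j) = cycleSpace G := by
      refine (Submodule.span_mono (by rintro _ ⟨j, rfl⟩; exact ⟨j, rfl⟩)).trans_eq hc.span_eq
        |>.antisymm (hc.span_eq ▸ Submodule.span_le.2 ?_)
      rintro _ ⟨j, rfl⟩
      by_cases hj : j = i
      · rw [hj, ← sum_singleton c i, ← hc.sum_compl]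
        exact sum_mem fun k hk => Submodule.subset_span ⟨⟨k, by simpa using hk⟩, rfl⟩
      · exact Submodule.subset_span ⟨⟨j, hj⟩, rfl⟩
    refine ⟨{j // j ≠ i}, inferInstance, fun j => c j, hspan, fun f => ?_⟩
    beta_reduce
    by_cases hf : f = e
    · subst hf
      obtain ⟨j, -, -, hij⟩ := hc.exists_other hi
      rw [if_pos rfl, coverage, card_le_one]
      intro a ha b hb
      have key (a : {j // j ≠ i}) (ha : c a f ≠ 0) : (a : ι) = j := (hij a ha).resolve_left a.2
      exact Subtype.ext ((key a (by simpa using ha)).trans (key b (by simpa using hb)).symm)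
    · rw [if_neg hf]
      exact (coverage_comp_le Subtype.val_injective c f).trans (hc.coverage_le f)
  · refine ⟨ι, inferInstance, c, hc.span_eq, fun f => ?_⟩
    by_cases hf : f = e
    · simp [hf, coverage, hi]
    · exact (hc.coverage_le f).trans_eq (if_neg hf).symm

lemma IsMacLane.deleteEdge (h : IsMacLane G) (e : Sym2 V) : IsMacLane (G.deleteEdges {e}) := by
  classical
  obtain ⟨ι, _, c, hc, hk⟩ := h.hasCycleCover_ite e
  have hmem (i : ι) : c i ∈ cycleSpace G := hc ▸ Submodule.subset_span ⟨i, rfl⟩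
  refine ⟨{i // c i e = 0}, inferInstance, fun i => c i,
    le_antisymm (Submodule.span_le.2 ?_) fun z hz => ?_, fun f => ?_⟩
  · rintro _ ⟨⟨i, hi⟩, rfl⟩
    refine ⟨fun f hf => ?_, (hmem i).2⟩
    by_cases hfe : f = e
    · rwa [hfe]
    · exact (hmem i).1 f (by simpa [hfe] using hf)
  · obtain ⟨a, rfl⟩ := (Submodule.mem_span_range_iff_exists_fun _).1
      (hc ▸ cycleSpace_mono (deleteEdges_le {e}) hz)
    refine sum_mem fun i _ => ?_
    by_cases hi : c i e = 0
    · exact Submodule.smul_mem _ _ (Submodule.subset_span ⟨⟨i, hi⟩, rfl⟩)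
    have huniq (j : ι) (hj : c j e ≠ 0) : j = i :=
      card_le_one.1 ((hk e).trans_eq (if_pos rfl)) j (by simpa using hj) i
        (by simpa using hi)
    have hai : a i * c i e = 0 := by
      rw [← hz.1 e (by simp), Finset.sum_apply, sum_eq_single i _ (by simp),
        Pi.smul_apply, smul_eq_mul]
      exact fun j _ hj => by rw [Pi.smul_apply, not_imp_comm.1 (huniq j) hj, smul_zero]
    rw [(mul_eq_zero.1 hai).resolve_right hi, zero_smul]
    exact zero_mem _
  · refine (coverage_comp_le Subtype.val_injective c f).trans ((hk f).trans ?_)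
    beta_reduce
    split_ifs
    exacts [one_le_two, le_rfl]

lemma IsMacLane.anti (h : IsMacLane G) (hHG : H ≤ G) : IsMacLane H := by
  suffices hdel : ∀ s : Set (Sym2 V), IsMacLane (G.deleteEdges s) by
    exact deleteEdges_sdiff_eq_of_le hHG ▸ hdel (G.edgeSet \ H.edgeSet)
  intro s
  induction s, s.toFinite using Set.Finite.induction_on with
  | empty => rwa [deleteEdges_empty]
  | @insert e s _ _ ih =>
    rw [Set.insert_eq, Set.union_comm, ← deleteEdges_deleteEdges]
    exact ih.deleteEdge e

lemma cycleSpace_sup_edge (huv : u ≠ v) (hz : z ∈ edgeSpace G)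
    (hbd : boundary V z = Pi.single u 1 + Pi.single v 1) :
    cycleSpace (G ⊔ edge u v) =
      cycleSpace G ⊔ Submodule.span (ZMod 2) {Pi.single s(u, v) 1 + z} := by
  have hcyc : Pi.single s(u, v) 1 + z ∈ cycleSpace (G ⊔ edge u v) :=
    ⟨add_mem (single_mem_edgeSpace ((mem_edgeSet_sup_edge huv).2 (Or.inr rfl)))
      (edgeSpace_mono le_sup_left hz),
      LinearMap.mem_ker.2 (by rw [map_add, boundary_single huv, hbd, chain_add_self])⟩
  refine le_antisymm (fun y hy => ?_) (sup_le (cycleSpace_mono le_sup_left)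
    ((Submodule.span_singleton_le_iff_mem _ _).2 hcyc))
  refine Submodule.mem_sup.2 ⟨y - y s(u, v) • (Pi.single s(u, v) 1 + z), ⟨fun e he => ?_, ?_⟩,
    y s(u, v) • (Pi.single s(u, v) 1 + z),
    Submodule.smul_mem _ _ (Submodule.mem_span_singleton_self _), sub_add_cancel ..⟩
  · by_cases hev : e = s(u, v)
    · simp [hev, hz s(u, v) (hev ▸ he)]
    · have hye : y e = 0 := hy.1 e (by simp only [mem_edgeSet_sup_edge huv, he, hev, or_self,
        not_false_eq_true])
      simp [hye, hz e he, hev]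
  · exact sub_mem hy.2 (Submodule.smul_mem _ _ hcyc.2)

lemma HasCycleCover.sup_edge (h : HasCycleCover G k) (huv : u ≠ v) (p : G.Walk u v) :
    HasCycleCover (G ⊔ edge u v) fun e => (s(u, v) :: p.edges).count e + k e := by
  refine (h.adjoin (cycleSpace_sup_edge huv (walkChain_mem_edgeSpace p)
    (boundary_walkChain p))).mono fun e _ => Nat.add_le_add_right ?_ _
  split_ifs with he
  · refine List.one_le_count_iff.2 (of_not_not fun hmem => he ?_)
    rw [List.mem_cons, not_or] at hmem
    rw [Pi.add_apply, Pi.single_eq_of_ne hmem.1, walkChain_apply, List.count_eq_zero.2 hmem.2,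
      Nat.cast_zero, add_zero]
  · exact Nat.zero_le _

lemma cycleSpace_sup_edge_of_isolated (hv : ∀ w, ¬G.Adj v w) (u : V) :
    cycleSpace (G ⊔ edge v u) = cycleSpace G := by
  rcases eq_or_ne v u with rfl | hvu
  · rw [edge_self_eq_bot, sup_bot_eq]
  refine le_antisymm (fun z hz => ⟨fun e he => ?_, hz.2⟩) (cycleSpace_mono le_sup_left)
  by_cases hev : e = s(v, u)
  · have hother : ∀ f ∈ ({f | v ∈ f} : Finset (Sym2 V)), f ≠ e → z f = 0 := fun f hf hfe =>
      hz.1 f fun h => by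
        obtain ⟨w, rfl⟩ := (mem_filter_univ _).1 hf
        exact ((mem_edgeSet_sup_edge hvu).1 h).elim (hv w) (fun h => hfe (h.trans hev.symm))
    have h := congrFun (LinearMap.mem_ker.1 hz.2) v
    rwa [boundary_apply, sum_eq_single e hother (by simp [hev])] at h
  · exact hz.1 e (by simp only [mem_edgeSet_sup_edge hvu, he, hev, or_self, not_false_eq_true])

-- The part of a cycle in `G` has its boundary on the common vertices, so a chain in the
-- intersection can close it up.
lemma cycleSpace_sup_le (hconn : ∀ u ∈ G.support ∩ H.support, ∀ v ∈ G.support ∩ H.support,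
    (G ⊓ H).Reachable u v) : cycleSpace (G ⊔ H) ≤ cycleSpace G ⊔ cycleSpace H := by
  classical
  intro z hz
  set y : Sym2 V → ZMod 2 := fun e => if e ∈ G.edgeSet then z e else 0 with hy
  have hyG : y ∈ edgeSpace G := fun e he => if_neg he
  have hyH : z - y ∈ edgeSpace H := fun e he => by
    by_cases heG : e ∈ G.edgeSet
    · simp only [hy, Pi.sub_apply, if_pos heG, sub_self]
    · simp only [hy, Pi.sub_apply, if_neg heG, sub_zero]
      exact hz.1 e (by simp only [edgeSet_sup, Set.mem_union, he, heG, or_self, not_false_eq_true])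
  have hbd : boundary V (z - y) = - boundary V y := by
    rw [map_sub, LinearMap.mem_ker.1 hz.2, zero_sub]
  have hsupp : ∀ v ∉ G.support ∩ H.support, boundary V y v = 0 := fun v hv => by
    by_cases hvG : v ∈ G.support
    · have h := congrFun hbd v
      rw [boundary_eq_zero_of_notMem_support hyH fun h => hv ⟨hvG, h⟩] at h
      exact neg_eq_zero.1 h.symm
    · exact boundary_eq_zero_of_notMem_support hyG hvG
  obtain ⟨x, hx, hxy⟩ := exists_boundary_eq hconn hsupp (sum_boundary_eq_zero hyG)
  refine Submodule.mem_sup.2 ⟨y - x, ⟨sub_mem hyG (edgeSpace_mono inf_le_left hx), ?_⟩,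
    z - y + x, ⟨add_mem hyH (edgeSpace_mono inf_le_right hx), ?_⟩, by abel⟩
  · exact LinearMap.mem_ker.2 (by rw [map_sub, hxy, sub_self])
  · exact LinearMap.mem_ker.2 (by rw [map_add, hbd, hxy, neg_add_cancel])

lemma IsMacLane.sup (hG : IsMacLane G) (hH : IsMacLane H)
    (hconn : ∀ u ∈ G.support ∩ H.support, ∀ v ∈ G.support ∩ H.support, (G ⊓ H).Reachable u v)
    (e : Sym2 V) (he : ∀ f ∈ G.edgeSet, f ∈ H.edgeSet → f = e) : IsMacLane (G ⊔ H) := by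
  obtain ⟨ι, _, c, hc, hck⟩ := hG.hasCycleCover_ite e
  obtain ⟨κ, _, d, hd, hdk⟩ := hH.hasCycleCover_ite e
  have hspan : Submodule.span (ZMod 2) (Set.range (Sum.elim c d)) = cycleSpace (G ⊔ H) := by
    rw [Set.Sum.elim_range, Submodule.span_union, hc, hd]
    exact le_antisymm (sup_le (cycleSpace_mono le_sup_left) (cycleSpace_mono le_sup_right))
      (cycleSpace_sup_le hconn)
  refine ⟨ι ⊕ κ, inferInstance, Sum.elim c d, hspan, fun f => ?_⟩
  have hcf : coverage c f ≤ if f = e then 1 else 2 := hck f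
  have hdf : coverage d f ≤ if f = e then 1 else 2 := hdk f
  change _ ≤ 2
  rw [coverage_sumElim]
  by_cases hfe : f = e
  · rw [if_pos hfe] at hcf hdf
    omega
  rw [if_neg hfe] at hcf hdf
  by_cases hfG : f ∈ G.edgeSet
  · rw [coverage_eq_zero hd fun h => hfe (he f hfG h)]
    omega
  · rw [coverage_eq_zero hc hfG]
    omega

end CycleCover

section Fan

section ListEdges

variable {V : Type*} {x y : V} {l l' : List V}

/-- The edges joining consecutive vertices of a list. -/
def pathEdges (l : List V) : List (Sym2 V) := List.zipWith (s(·, ·)) l l.tail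

/-- The edges joining cyclically consecutive vertices of a list. -/
def cycleEdges (l : List V) : List (Sym2 V) := List.zipWith (s(·, ·)) l (l.rotate 1)

/-- The graph whose edges join `x` to the vertices of a list. -/
def fan (x : V) (l : List V) : SimpleGraph V := fromEdgeSet {e | e ∈ l.map fun v => s(x, v)}

@[simp] lemma pathEdges_singleton (x : V) : pathEdges [x] = [] := rfl

@[simp] lemma pathEdges_cons_cons (x y : V) (l : List V) :
    pathEdges (x :: y :: l) = s(x, y) :: pathEdges (y :: l) := rfl

lemma pathEdges_append (l : List V) (x : V) (l' : List V) :
    pathEdges (l ++ x :: l') = pathEdges (l ++ [x]) ++ pathEdges (x :: l') := by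
  induction l with
  | nil => rfl
  | cons y l ih =>
    cases l with
    | nil => rfl
    | cons z l => simpa using ih

lemma cycleEdges_cons (x : V) (l : List V) : cycleEdges (x :: l) = pathEdges (x :: l ++ [x]) := by
  have hzip (y : V) : List.zipWith (s(·, ·)) (y :: l) (l ++ [x]) = pathEdges (y :: (l ++ [x])) := by
    induction l generalizing y with
    | nil => rfl
    | cons z l ih => rw [List.cons_append, pathEdges_cons_cons, ← ih, List.zipWith_cons_cons]
  rw [cycleEdges, List.rotate_cons_succ, List.rotate_zero]
  exact hzip x

lemma cycleEdges_perm (h : l ~r l') : (cycleEdges l).Perm (cycleEdges l') := by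
  obtain ⟨n, rfl⟩ := h
  have hrot : cycleEdges (l.rotate n) = (cycleEdges l).rotate n := by
    rw [cycleEdges, cycleEdges, List.rotate_rotate, Nat.add_comm, ← List.rotate_rotate,
      ← List.zipWith_rotate_distrib _ _ _ _ (List.length_rotate ..).symm]
  exact hrot ▸ (List.rotate_perm ..).symm

lemma fan_cons (x y : V) (l : List V) : fan x (y :: l) = edge x y ⊔ fan x l := by
  rw [fan, edge, fan, ← fromEdgeSet_union]
  congr 1
  ext e
  simp

lemma fan_adj_of_mem (hy : y ∈ l) (hxy : x ≠ y) : (fan x l).Adj x y :=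
  (fromEdgeSet_adj _).2 ⟨List.mem_map_of_mem hy, hxy⟩

end ListEdges

variable {V : Type*} [Fintype V] [DecidableEq V] {G : SimpleGraph V} {k : Sym2 V → ℕ} {x y : V}

-- Each new spoke closes a triangle with the previous one.
lemma HasCycleCover.sup_fan {l : List V} (h : HasCycleCover G k) (hxy : G.Adj x y) (hx : x ∉ l)
    (hl : ∀ e ∈ pathEdges (y :: l), e ∈ G.edgeSet) :
    HasCycleCover (G ⊔ fan x l) fun e => [s(x, y)].count e +
      2 * (l.map fun v => s(x, v)).count e + (pathEdges (y :: l)).count e + k e := by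
  induction l generalizing G k y with
  | nil =>
    have hfan : G ⊔ fan x [] = G := by simp [fan]
    rw [hfan]
    exact h.mono fun e _ => Nat.le_add_left ..
  | cons z l ih =>
    obtain ⟨hxz, hxl⟩ := List.ne_and_not_mem_of_not_mem_cons hx
    rw [pathEdges_cons_cons, List.forall_mem_cons] at hl
    have hyz : G.Adj y z := hl.1
    have hzG := h.sup_edge hxz (.cons hxy (.cons hyz .nil))
    have hnew : (G ⊔ edge x z).Adj x z := (mem_edgeSet_sup_edge hxz).2 (Or.inr rfl)
    rw [fan_cons, ← sup_assoc]
    refine (ih hzG hnew hxl fun e he => (mem_edgeSet_sup_edge hxz).2 (Or.inl (hl.2 e he))).mono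
      fun e _ => ?_
    simp only [pathEdges_cons_cons, List.map_cons, List.count_cons, List.count_nil, Walk.edges_cons,
      Walk.edges_nil]
    omega

end Fan

/-! ### Euler's formula -/

section Euler

open Module

lemma finrank_edgeSpace {V : Type*} [Finite V] (G : SimpleGraph V) :
    finrank (ZMod 2) (edgeSpace G) = G.edgeSet.ncard := by
  have h : edgeSpace G = Pi.spanSubset (ZMod 2) G.edgeSet := by
    ext z
    exact (Pi.mem_spanSubset_iff ..).symm
  rw [h, Pi.dim_spanSubset]

variable {V : Type*} [Fintype V]

/-- The sum of the coefficients of a vertex chain; boundaries of edge chains lie in its kernel. -/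
def augmentation (V : Type*) [Fintype V] : (V → ZMod 2) →ₗ[ZMod 2] ZMod 2 :=
  ∑ v, LinearMap.proj v

lemma finrank_ker_augmentation [Nonempty V] :
    finrank (ZMod 2) (LinearMap.ker (augmentation V)) + 1 = Fintype.card V := by
  classical
  have hsurj : LinearMap.range (augmentation V) = ⊤ := by
    refine LinearMap.range_eq_top.2 fun a => ?_
    obtain ⟨v⟩ := ‹Nonempty V›
    exact ⟨Pi.single v a, by simp [augmentation]⟩
  rw [← finrank_fintype_fun_eq_card (ZMod 2), ← (augmentation V).finrank_range_add_finrank_ker,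
    hsurj, finrank_top, finrank_self, add_comm]

variable [DecidableEq V] {G : SimpleGraph V} {z : Sym2 V → ZMod 2}

lemma finrank_cycleSpace_add (G : SimpleGraph V) :
    finrank (ZMod 2) (cycleSpace G) + finrank (ZMod 2) ((edgeSpace G).map (boundary V)) =
      G.edgeSet.ncard := by
  rw [← finrank_edgeSpace, add_comm,
    ← ((boundary V).domRestrict (edgeSpace G)).finrank_range_add_finrank_ker,
    LinearMap.range_domRestrict, LinearMap.ker_domRestrict, cycleSpace,
    ← Submodule.map_comap_subtype, Submodule.finrank_map_subtype_eq]

lemma card_edgeSet_lt_finrank_cycleSpace_add [Nonempty V] (G : SimpleGraph V) :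
    G.edgeSet.ncard < finrank (ZMod 2) (cycleSpace G) + Fintype.card V := by
  have hle : (edgeSpace G).map (boundary V) ≤ LinearMap.ker (augmentation V) := by
    rintro _ ⟨z, hz, rfl⟩
    rw [LinearMap.mem_ker, augmentation, LinearMap.sum_apply]
    exact sum_boundary_eq_zero hz
  have h1 := Submodule.finrank_mono hle
  have h2 := finrank_ker_augmentation (V := V)
  have h3 := finrank_cycleSpace_add G
  omega

lemma le_card_support_of_mem_cycleSpace {g : ℕ}
    (hg : ∀ (v : V) (C : G.Walk v v), C.IsCycle → g ≤ C.length) (hz : z ∈ cycleSpace G)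
    (h0 : z ≠ 0) : g ≤ #{e | z e ≠ 0} := by
  obtain ⟨v, C, hC, hCz⟩ := exists_isCycle_of_mem_cycleSpace hz h0
  calc g ≤ C.length := hg v C hC
    _ = #C.edges.toFinset := by rw [List.toFinset_card_of_nodup hC.edges_nodup, Walk.length_edges]
    _ ≤ #{e | z e ≠ 0} := card_le_card fun e he => by simpa using hCz e (by simpa using he)

namespace IsFaceSystem

variable {ι : Type*} [Fintype ι] {c : ι → Sym2 V → ZMod 2}

lemma finrank_cycleSpace_lt (hc : IsFaceSystem G c) (h0 : cycleSpace G ≠ ⊥) :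
    finrank (ZMod 2) (cycleSpace G) < #{i | c i ≠ 0} := by
  classical
  obtain ⟨i, hi⟩ : ∃ i, c i ≠ 0 := by
    by_contra! h
    exact h0 (hc.span_eq ▸ Submodule.span_eq_bot.2 (by rintro _ ⟨i, rfl⟩; exact h i))
  set F : Finset ι := {i | c i ≠ 0} with hF
  have hiF : i ∈ F := by simpa [hF] using hi
  have hmem {j : ι} (hj : j ≠ i) : c j ∈ Submodule.span (ZMod 2) ((F.erase i).image c : Set _) := by
    by_cases h : c j = 0
    · exact h ▸ zero_mem _
    · exact Submodule.subset_span (by simpa [hF] using ⟨j, ⟨h, hj⟩, rfl⟩)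
  have hle : cycleSpace G ≤ Submodule.span (ZMod 2) ((F.erase i).image c : Set _) := by
    rw [← hc.span_eq, Submodule.span_le]
    rintro _ ⟨j, rfl⟩
    by_cases hj : j = i
    · rw [hj, ← sum_singleton c i, ← hc.sum_compl]
      exact sum_mem fun k hk => hmem (by simpa using hk)
    · exact hmem hj
  calc finrank (ZMod 2) (cycleSpace G) ≤ #((F.erase i).image c) :=
        (Submodule.finrank_mono hle).trans (finrank_span_finset_le_card _)
    _ ≤ #(F.erase i) := card_image_le
    _ < #F := card_erase_lt_of_mem hiF

lemma sum_card_support_le (hc : IsFaceSystem G c) :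
    ∑ i, #{e | c i e ≠ 0} ≤ 2 * G.edgeSet.ncard := by
  classical
  calc ∑ i, #{e | c i e ≠ 0} = ∑ e, coverage c e := by
        simp only [coverage, card_filter]
        exact sum_comm
    _ = ∑ e ∈ G.edgeSet.toFinset, coverage c e := by
        refine (sum_subset (subset_univ _) fun e _ he => ?_).symm
        exact coverage_eq_zero hc.span_eq (by simpa using he)
    _ ≤ ∑ e ∈ G.edgeSet.toFinset, 2 := sum_le_sum fun e _ => hc.coverage_le e
    _ = 2 * G.edgeSet.ncard := by
        rw [sum_const, smul_eq_mul, mul_comm, Set.ncard_eq_toFinset_card']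

end IsFaceSystem

-- Euler's formula `V - E + F ≥ 2`, where each face has at least `g` edges.
lemma IsMacLane.girth_mul_le [Nonempty V] {g : ℕ} (h : IsMacLane G)
    (hg : ∀ (v : V) (C : G.Walk v v), C.IsCycle → g ≤ C.length)
    (hVE : Fintype.card V ≤ G.edgeSet.ncard) :
    g * (G.edgeSet.ncard + 2) ≤ 2 * G.edgeSet.ncard + g * Fintype.card V := by
  classical
  obtain ⟨ι, _, c, hc⟩ := h.exists_isFaceSystem
  have hdim := card_edgeSet_lt_finrank_cycleSpace_add G
  have h0 : cycleSpace G ≠ ⊥ := fun h => by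
    rw [h, finrank_bot] at hdim
    omega
  have hfaces : g * #{i | c i ≠ 0} ≤ 2 * G.edgeSet.ncard := by
    refine le_trans ?_ hc.sum_card_support_le
    rw [mul_comm, ← smul_eq_mul, ← sum_const]
    exact (sum_le_sum fun i hi => le_card_support_of_mem_cycleSpace hg (hc.mem_cycleSpace i)
      (by simpa using hi)).trans (sum_le_sum_of_subset (subset_univ _))
  have hF := hc.finrank_cycleSpace_lt h0
  calc g * (G.edgeSet.ncard + 2) ≤ g * (#{i | c i ≠ 0} + Fintype.card V) :=
        Nat.mul_le_mul_left _ (by omega)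
    _ ≤ _ := by rw [mul_add]; exact Nat.add_le_add_right hfaces _

end Euler

/-! ### Minors -/

section Model

variable {V W : Type*} {G : SimpleGraph V} {H : SimpleGraph W} {f : W → Set V}
  {ε : Sym2 W → Sym2 V}

/-- A minor model with branch sets `f w`, in which the edge `e` of `H` is represented by the edge
`ε e` of `G`. -/
structure IsMinorModel (H : SimpleGraph W) (G : SimpleGraph V) (f : W → Set V)
    (ε : Sym2 W → Sym2 V) : Prop where
  connected (w : W) : (G.induce (f w)).Connected
  disjoint : Pairwise fun w w' => Disjoint (f w) (f w')
  exists_eq ⦃w w' : W⦄ : H.Adj w w' → ∃ v ∈ f w, ∃ v' ∈ f w', G.Adj v v' ∧ ε s(w, w') = s(v, v')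

/-- The edges of `G` inside the branch sets. -/
def branchGraph (G : SimpleGraph V) (f : W → Set V) : SimpleGraph V where
  Adj u v := G.Adj u v ∧ ∃ w, u ∈ f w ∧ v ∈ f w
  symm := ⟨fun _ _ ⟨h, w, hu, hv⟩ => ⟨h.symm, w, hv, hu⟩⟩
  loopless := ⟨fun _ h => G.irrefl h.1⟩

lemma exists_isMinorModel (h : H.IsMinorOf G) : ∃ f ε, IsMinorModel H G f ε := by
  obtain ⟨f, hconn, hdisj, hadj⟩ := h
  have hex (e : Sym2 W) : ∃ e' : Sym2 V, ∀ w w', e = s(w, w') → H.Adj w w' →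
      ∃ v ∈ f w, ∃ v' ∈ f w', G.Adj v v' ∧ e' = s(v, v') := by
    induction e with | _ a b =>
    by_cases hab : H.Adj a b
    · obtain ⟨v, hv, v', hv', hvv'⟩ := hadj hab
      refine ⟨s(v, v'), fun w w' hw _ => ?_⟩
      rcases Sym2.eq_iff.1 hw with ⟨rfl, rfl⟩ | ⟨rfl, rfl⟩
      · exact ⟨v, hv, v', hv', hvv', rfl⟩
      · exact ⟨v', hv', v, hv, hvv'.symm, Sym2.eq_swap⟩
    · refine ⟨Sym2.map (fun _ => (hconn a).nonempty.some) s(a, b), fun w w' hw hww' => ?_⟩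
      exact absurd ((H.mem_edgeSet (v := a) (w := b)).1 (hw ▸ hww')) hab
  choose ε hε using hex
  exact ⟨f, ε, hconn, hdisj, fun w w' h => hε _ w w' rfl h⟩

namespace IsMinorModel

lemma eq_of_mem (h : IsMinorModel H G f ε) {w w' : W} {v : V} (hv : v ∈ f w) (hv' : v ∈ f w') :
    w = w' :=
  of_not_not fun hne => Set.disjoint_left.1 (h.disjoint hne) hv hv'

lemma mem_edgeSet (h : IsMinorModel H G f ε) {e : Sym2 W} (he : e ∈ H.edgeSet) :
    ε e ∈ G.edgeSet := by
  induction e with | _ a b =>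
  obtain ⟨v, -, v', -, hvv', heq⟩ := h.exists_eq he
  exact heq ▸ hvv'

lemma notMem_branchGraph (h : IsMinorModel H G f ε) {e : Sym2 W} (he : e ∈ H.edgeSet) :
    ε e ∉ (branchGraph G f).edgeSet := by
  induction e with | _ a b =>
  obtain ⟨v, hv, v', hv', -, heq⟩ := h.exists_eq he
  rw [heq]
  rintro ⟨-, w, hw, hw'⟩
  exact (H.ne_of_adj he) ((h.eq_of_mem hv hw).trans (h.eq_of_mem hv' hw').symm)

lemma reachable_branchGraph (h : IsMinorModel H G f ε) {w : W} {u v : V} (hu : u ∈ f w)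
    (hv : v ∈ f w) : (branchGraph G f).Reachable u v := by
  have hle : (G.induce (f w)).map (Function.Embedding.subtype _) ≤ branchGraph G f := by
    rintro _ _ ⟨-, a, b, hab, rfl, rfl⟩
    exact ⟨hab, w, a.2, b.2⟩
  exact (((h.connected w).preconnected ⟨u, hu⟩ ⟨v, hv⟩).map
    (Embedding.map (Function.Embedding.subtype _) _).toHom).mono hle

lemma exists_mem_of_mem_edge (h : IsMinorModel H G f ε) {e : Sym2 W} (he : e ∈ H.edgeSet) {v : V}
    (hv : v ∈ ε e) : ∃ w, v ∈ f w := by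
  induction e with | _ a b =>
  obtain ⟨x, hx, x', hx', -, heq⟩ := h.exists_eq he
  rcases Sym2.mem_iff.1 (heq ▸ hv) with rfl | rfl
  exacts [⟨a, hx⟩, ⟨b, hx'⟩]

open Classical in
lemma card_inter_edge [DecidableEq V] (h : IsMinorModel H G f ε) {A : Finset V} {w : W}
    (hA : ∀ v, v ∈ A ↔ v ∈ f w) {e : Sym2 W} (he : e ∈ H.edgeSet) :
    (#{v ∈ A | v ∈ ε e} : ZMod 2) = if w ∈ e then 1 else 0 := by
  induction e with | _ a b =>
  obtain ⟨v, hv, v', hv', hvv', heq⟩ := h.exists_eq he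
  have hmem (v : V) (a : W) (hva : v ∈ f a) : v ∈ A ↔ w = a :=
    (hA v).trans ⟨fun hvw => h.eq_of_mem hvw hva, fun h => h ▸ hva⟩
  rw [heq, card_incident_eq A hvv'.ne]
  simp only [hmem v a hv, hmem v' b hv', Sym2.mem_iff]
  have hab := H.ne_of_adj he
  by_cases hwa : w = a <;> by_cases hwb : w = b <;> simp_all

lemma injOn (h : IsMinorModel H G f ε) [Finite V] : Set.InjOn ε H.edgeSet := by
  classical
  have := Fintype.ofFinite V
  intro e he e' he' hee'
  refine Sym2.ext fun w => ?_
  have h1 := h.card_inter_edge (A := (f w).toFinset) (fun v => Set.mem_toFinset) he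
  have h2 := h.card_inter_edge (A := (f w).toFinset) (fun v => Set.mem_toFinset) he'
  rw [← hee', h1] at h2
  by_cases hw : w ∈ e <;> by_cases hw' : w ∈ e' <;> simp_all

end IsMinorModel

end Model

section PushChain

variable {V W : Type*} {G : SimpleGraph V} {H : SimpleGraph W} {f : W → Set V}
  {ε : Sym2 W → Sym2 V} {z : Sym2 V → ZMod 2}

open Classical in
/-- The restriction of a chain to the edges representing the edges of a minor. -/
noncomputable def pushChain (H : SimpleGraph W) (ε : Sym2 W → Sym2 V) :
    (Sym2 V → ZMod 2) →ₗ[ZMod 2] (Sym2 W → ZMod 2) where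
  toFun z e := if e ∈ H.edgeSet then z (ε e) else 0
  map_add' y z := funext fun e => by
    simp only [Pi.add_apply]
    split_ifs <;> simp
  map_smul' a z := funext fun e => by
    simp only [Pi.smul_apply]
    split_ifs <;> simp

lemma pushChain_apply {e : Sym2 W} (he : e ∈ H.edgeSet) : pushChain H ε z e = z (ε e) := if_pos he

lemma pushChain_apply_of_notMem {e : Sym2 W} (he : e ∉ H.edgeSet) : pushChain H ε z e = 0 :=
  if_neg he

namespace IsMinorModel

lemma pushChain_eq_zero (h : IsMinorModel H G f ε) (hz : z ∈ edgeSpace (branchGraph G f)) :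
    pushChain H ε z = 0 := funext fun e => by
  by_cases he : e ∈ H.edgeSet
  · rw [pushChain_apply he, hz _ (h.notMem_branchGraph he), Pi.zero_apply]
  · rw [pushChain_apply_of_notMem he, Pi.zero_apply]

lemma exists_mem_edgeSpace_pushChain_eq [Finite V] [Finite W] (h : IsMinorModel H G f ε)
    {y : Sym2 W → ZMod 2} (hy : y ∈ edgeSpace H) :
    ∃ z ∈ edgeSpace (branchGraph G f ⊔ fromEdgeSet (ε '' H.edgeSet)), pushChain H ε z = y := by
  classical
  have := Fintype.ofFinite W
  refine ⟨∑ e ∈ H.edgeSet.toFinset, y e • Pi.single (ε e) 1, sum_mem fun e he =>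
    Submodule.smul_mem _ _ (single_mem_edgeSpace ?_), funext fun e => ?_⟩
  · have heH : e ∈ H.edgeSet := by simpa using he
    rw [edgeSet_sup, edgeSet_fromEdgeSet]
    exact Or.inr ⟨⟨e, heH, rfl⟩, G.not_isDiag_of_mem_edgeSet (h.mem_edgeSet heH)⟩
  · by_cases he : e ∈ H.edgeSet
    · rw [pushChain_apply he, Finset.sum_apply, sum_eq_single e _ (by simp [he])]
      · simp
      · intro e' he' hne
        rw [Pi.smul_apply, Pi.single_eq_of_ne, smul_zero]
        exact fun heq => hne (h.injOn (by simpa using he') he heq.symm)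
    · rw [pushChain_apply_of_notMem he, hy e he]

variable [Fintype V] [DecidableEq V] [Fintype W] [DecidableEq W]

-- Edges inside a branch set contribute an even number of ends.
lemma boundary_pushChain (h : IsMinorModel H G f ε) {A : Finset V} {w : W}
    (hA : ∀ v, v ∈ A ↔ v ∈ f w)
    (hz : z ∈ edgeSpace (branchGraph G f ⊔ fromEdgeSet (ε '' H.edgeSet))) :
    boundary W (pushChain H ε z) w = ∑ v ∈ A, boundary V z v := by
  classical
  have hother : ∀ e ∉ H.edgeSet.toFinset.image ε, (#{v ∈ A | v ∈ e} : ZMod 2) * z e = 0 :=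
    fun e he => by
    by_cases hze : e ∈ (branchGraph G f).edgeSet
    · induction e with | _ a b =>
      obtain ⟨hab, w', ha, hb⟩ := hze
      rw [card_incident_eq A hab.ne, if_pos, zero_mul]
      rw [hA, hA]
      exact ⟨fun hw => h.eq_of_mem ha hw ▸ hb, fun hw => h.eq_of_mem hb hw ▸ ha⟩
    · rw [hz e fun h => ?_, mul_zero]
      rw [edgeSet_sup, edgeSet_fromEdgeSet] at h
      exact he (by simpa using (h.resolve_left hze).1)
  rw [sum_boundary, ← sum_subset (subset_univ (H.edgeSet.toFinset.image ε)) fun e _ => hother e,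
    sum_image fun e he e' he' => h.injOn (by simpa using he) (by simpa using he'), boundary_apply,
    sum_filter, ← sum_subset (subset_univ H.edgeSet.toFinset)]
  · refine sum_congr rfl fun e he => ?_
    rw [h.card_inter_edge hA (by simpa using he), pushChain_apply (by simpa using he), ite_mul,
      one_mul, zero_mul]
    congr
  · intro e _ he
    rw [pushChain_apply_of_notMem (by simpa using he), ite_self]

-- The boundary has even weight on each branch set, and branch sets are connected.
lemma exists_mem_edgeSpace_boundary_eq (h : IsMinorModel H G f ε)
    (hz : z ∈ edgeSpace (branchGraph G f ⊔ fromEdgeSet (ε '' H.edgeSet)))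
    (hpush : boundary W (pushChain H ε z) = 0) :
    ∃ t ∈ edgeSpace (branchGraph G f), boundary V t = boundary V z := by
  classical
  have hclose (w : W) : ∃ t ∈ edgeSpace (branchGraph G f), boundary V t =
      fun v => if v ∈ f w then boundary V z v else 0 := by
    refine exists_boundary_eq (fun u hu v hv => h.reachable_branchGraph hu hv)
      (fun v hv => if_neg hv) ?_
    rw [← sum_filter, ← h.boundary_pushChain (w := w) (by simp) hz, hpush, Pi.zero_apply]
  choose t ht htz using hclose
  refine ⟨∑ w, t w, sum_mem fun w _ => ht w, (map_sum _ _ _).trans (funext fun v => ?_)⟩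
  simp only [htz, Finset.sum_apply]
  by_cases hv : ∃ w, v ∈ f w
  · obtain ⟨w, hw⟩ := hv
    rw [sum_eq_single w (fun w' _ hne => if_neg fun hw' => hne (h.eq_of_mem hw' hw)) (by simp),
      if_pos hw]
  · rw [sum_eq_zero fun w _ => if_neg fun hw => hv ⟨w, hw⟩]
    refine (boundary_eq_zero_of_notMem_support hz fun ⟨v', hv'⟩ => hv ?_).symm
    rcases hv' with ⟨-, w, hw, -⟩ | hv'
    · exact ⟨w, hw⟩
    · obtain ⟨e, he, heq⟩ := ((fromEdgeSet_adj _).1 hv').1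
      exact h.exists_mem_of_mem_edge he (heq ▸ Sym2.mem_mk_left v v')

lemma exists_pushChain_eq (h : IsMinorModel H G f ε) {y : Sym2 W → ZMod 2}
    (hy : y ∈ cycleSpace H) :
    ∃ z ∈ cycleSpace (branchGraph G f ⊔ fromEdgeSet (ε '' H.edgeSet)), pushChain H ε z = y := by
  obtain ⟨z, hz, rfl⟩ := h.exists_mem_edgeSpace_pushChain_eq hy.1
  obtain ⟨t, ht, htz⟩ := h.exists_mem_edgeSpace_boundary_eq hz (LinearMap.mem_ker.1 hy.2)
  refine ⟨z + t, ⟨add_mem hz (edgeSpace_mono le_sup_left ht),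
    LinearMap.mem_ker.2 (by rw [map_add, htz, chain_add_self])⟩, ?_⟩
  rw [map_add, h.pushChain_eq_zero ht, add_zero]

lemma cycleSpace_eq_map (h : IsMinorModel H G f ε) :
    (cycleSpace (branchGraph G f ⊔ fromEdgeSet (ε '' H.edgeSet))).map (pushChain H ε) =
      cycleSpace H := by
  classical
  refine le_antisymm ?_ fun y hy => h.exists_pushChain_eq hy
  rintro _ ⟨z, hz, rfl⟩
  refine ⟨fun e he => pushChain_apply_of_notMem he, LinearMap.mem_ker.2 (funext fun w => ?_)⟩
  rw [h.boundary_pushChain (A := (f w).toFinset) (fun v => Set.mem_toFinset) hz.1,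
    LinearMap.mem_ker.1 hz.2]
  exact sum_eq_zero fun _ _ => rfl

end IsMinorModel

end PushChain

lemma IsMacLane.of_isMinorOf {V W : Type*} [Fintype V] [DecidableEq V] [Fintype W] [DecidableEq W]
    {G : SimpleGraph V} {H : SimpleGraph W} (hG : IsMacLane G) (h : H.IsMinorOf G) :
    IsMacLane H := by
  obtain ⟨f, ε, hm⟩ := exists_isMinorModel h
  have hle : branchGraph G f ⊔ fromEdgeSet (ε '' H.edgeSet) ≤ G := by
    refine sup_le (fun _ _ h => h.1) ((fromEdgeSet_mono ?_).trans_eq G.fromEdgeSet_edgeSet)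
    rintro _ ⟨e, he, rfl⟩
    exact hm.mem_edgeSet he
  obtain ⟨ι, _, c, hc, h2⟩ := hG.anti hle
  refine ⟨ι, inferInstance, fun i => pushChain H ε (c i), ?_, fun e => ?_⟩
  · rw [← hm.cycleSpace_eq_map, ← hc, Submodule.map_span, ← Set.range_comp]
    rfl
  · by_cases he : e ∈ H.edgeSet
    · simpa only [coverage, pushChain_apply he] using h2 (ε e)
    · simp [coverage, pushChain_apply_of_notMem he]

lemma not_isMacLane_completeGraph : ¬ IsMacLane (completeGraph (Fin 5)) := by
  intro h
  have hE : (completeGraph (Fin 5)).edgeSet.ncard = 10 := by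
    rw [← coe_edgeFinset, Set.ncard_coe_finset, card_edgeFinset_top_eq_card_choose_two]
    rfl
  have := h.girth_mul_le (g := 3) (fun _ C hC => hC.three_le_length)
    (by rw [hE, Fintype.card_fin]; omega)
  rw [hE, Fintype.card_fin] at this
  omega

lemma not_isMacLane_completeBipartiteGraph :
    ¬ IsMacLane (completeBipartiteGraph (Fin 3) (Fin 3)) := by
  intro h
  have hE : (completeBipartiteGraph (Fin 3) (Fin 3)).edgeSet.ncard = 9 := by
    rw [Set.ncard, encard_edgeSet_completeBipartiteGraph]
    simp
  have hcol : (completeBipartiteGraph (Fin 3) (Fin 3)).Colorable 2 :=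
    (CompleteBipartiteGraph.bicoloring (Fin 3) (Fin 3)).colorable
  have hgirth (v) (C : (completeBipartiteGraph (Fin 3) (Fin 3)).Walk v v) (hC : C.IsCycle) :
      4 ≤ C.length := by
    have := hC.three_le_length
    obtain ⟨k, hk⟩ := two_colorable_iff_forall_loop_even.1 hcol v C
    omega
  have := h.girth_mul_le hgirth (by simp [hE])
  rw [hE, Fintype.card_sum, Fintype.card_fin] at this
  omega

lemma IsMacLane.isPlanar {V : Type*} [Fintype V] [DecidableEq V] {G : SimpleGraph V}
    (h : IsMacLane G) : G.IsPlanar :=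
  ⟨fun hK => not_isMacLane_completeGraph (h.of_isMinorOf hK),
    fun hK => not_isMacLane_completeBipartiteGraph (h.of_isMinorOf hK)⟩

/-! ### Cuts and contractions -/

section Cut

variable {V : Type*} {G K : SimpleGraph V} {s X D : Finset V} {p q x : V}

/-- `D` is a union of components of `G[s] - X`, neither empty nor everything. -/
structure IsCut (G : SimpleGraph V) (s X D : Finset V) : Prop where
  nonempty : D.Nonempty
  subset : D ⊆ s
  disjoint : Disjoint D X
  exists_notMem : ∃ v ∈ s, v ∉ X ∧ v ∉ D
  closed ⦃u v : V⦄ : u ∈ D → G.Adj u v → v ∈ D ∨ v ∈ X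

lemma reachable_of_forall_not_isCut (hs : G.support ⊆ s) (h : ∀ D, ¬IsCut G s X D)
    (hK : ∀ ⦃a b⦄, G.Adj a b → a ∉ X → b ∉ X → K.Adj a b) (hp : p ∈ s) (hpX : p ∉ X)
    (hq : q ∈ s) (hqX : q ∉ X) : K.Reachable p q := by
  classical
  by_contra hpq
  refine h {w ∈ s | w ∉ X ∧ K.Reachable p w} ⟨⟨p, by simp [hp, hpX]⟩, filter_subset _ _,
    disjoint_left.2 fun w hw => (mem_filter.1 hw).2.1,
    ⟨q, hq, hqX, fun hw => hpq (mem_filter.1 hw).2.2⟩, fun u v hu huv => ?_⟩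
  obtain ⟨-, huX, hpu⟩ := mem_filter.1 hu
  by_cases hvX : v ∈ X
  · exact Or.inr hvX
  · exact Or.inl (mem_filter.2 ⟨hs ⟨u, huv.symm⟩, hvX, hpu.trans (hK huv huX hvX).reachable⟩)

namespace IsCut

lemma exists_connected (h : IsCut G s X D) :
    ∃ Q, IsCut G s X Q ∧ Q ⊆ D ∧ (G.induce (Q : Set V)).Connected := by
  classical
  induction D using Finset.strongInduction with | H D ih =>
  by_cases hD : (G.induce (D : Set V)).Preconnected
  · exact ⟨D, h, Subset.rfl, (connected_iff _).2 ⟨hD, h.nonempty.to_subtype⟩⟩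
  obtain ⟨u, v, huv⟩ : ∃ u v : (D : Set V), ¬(G.induce (D : Set V)).Reachable u v := by
    simpa only [Preconnected, not_forall] using hD
  set D' : Finset V := {w ∈ D | ∃ hw : w ∈ D, (G.induce (D : Set V)).Reachable u ⟨w, hw⟩}
  have hvD' : v.1 ∉ D' := fun hv => huv (mem_filter.1 hv).2.2
  have hD' : D' ⊆ D := filter_subset _ _
  obtain ⟨w, hws, hwX, hwD⟩ := h.exists_notMem
  have hcut : IsCut G s X D' := by
    refine ⟨⟨u, mem_filter.2 ⟨u.2, u.2, Reachable.rfl⟩⟩, hD'.trans h.subset,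
      h.disjoint.mono_left hD', ⟨w, hws, hwX, fun hw => hwD (hD' hw)⟩, fun a b ha hab => ?_⟩
    obtain ⟨-, haD, hua⟩ := mem_filter.1 ha
    refine (h.closed haD hab).imp_left fun hb => mem_filter.2 ⟨hb, hb, hua.trans ?_⟩
    exact Adj.reachable (G := G.induce (D : Set V)) (u := ⟨a, haD⟩) (v := ⟨b, hb⟩) hab
  obtain ⟨Q, hQ, hQD', hconn⟩ := ih D' (hD'.ssubset_of_not_subset fun hDD' => hvD' (hDD' v.2))
    hcut
  exact ⟨Q, hQ, hQD'.trans hD', hconn⟩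

variable [DecidableEq V]

lemma compl (h : IsCut G s X D) (hs : G.support ⊆ s) : IsCut G s X ((s \ X) \ D) := by
  obtain ⟨w, hws, hwX, hwD⟩ := h.exists_notMem
  obtain ⟨d, hd⟩ := h.nonempty
  refine ⟨⟨w, by simp [hws, hwX, hwD]⟩, sdiff_subset.trans sdiff_subset,
    disjoint_sdiff_self_left.mono_left sdiff_subset,
    ⟨d, h.subset hd, disjoint_left.1 h.disjoint hd, by simp [hd]⟩, fun u v hu huv => ?_⟩
  simp only [mem_sdiff] at hu ⊢
  by_cases hvX : v ∈ X
  · exact Or.inr hvX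
  · exact Or.inl ⟨⟨hs ⟨u, huv.symm⟩, hvX⟩,
      fun hvD => (h.closed hvD huv.symm).elim hu.2 hu.1.2⟩

lemma erase (h : IsCut G s X D) (hx : ∀ u ∈ D, ¬G.Adj u x) : IsCut G s (X.erase x) D := by
  obtain ⟨w, hws, hwX, hwD⟩ := h.exists_notMem
  refine ⟨h.nonempty, h.subset, h.disjoint.mono_right (erase_subset _ _),
    ⟨w, hws, fun hw => hwX (mem_of_mem_erase hw), hwD⟩, fun u v hu huv => ?_⟩
  exact (h.closed hu huv).imp_right fun hv => mem_erase.2 ⟨fun hvx => hx u hu (hvx ▸ huv), hv⟩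

end IsCut

end Cut

section Contraction

variable {V W : Type*} {G G' : SimpleGraph V} {H : SimpleGraph W} {x : V} {Q : Set V}

lemma reachable_of_forall_adj {K : SimpleGraph W} {φ : V → W}
    (h : ∀ ⦃u v⦄, G.Adj u v → K.Reachable (φ u) (φ v)) {u v : V} (huv : G.Reachable u v) :
    K.Reachable (φ u) (φ v) := by
  obtain ⟨p⟩ := huv
  induction p with
  | nil => rfl
  | cons hadj _ ih => exact (h hadj).trans ih

/-- `G'` arises from a subgraph of `G` by contracting the connected set `insert x Q` to `x`. -/
structure IsContraction (G' G : SimpleGraph V) (x : V) (Q : Set V) : Prop where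
  connected : (G.induce (insert x Q)).Connected
  not_adj ⦃u v : V⦄ : u ∈ Q → ¬G'.Adj u v
  adj_or ⦃u v : V⦄ : G'.Adj u v →
    G.Adj u v ∨ (u = x ∧ ∃ q ∈ Q, G.Adj q v) ∨ (v = x ∧ ∃ q ∈ Q, G.Adj u q)

namespace IsContraction

lemma disjoint_of_connected (h : IsContraction G' G x Q) {A : Set V} (hA : (G'.induce A).Connected)
    {a b : V} (ha : a ∈ A) (hab : G'.Adj a b) : Disjoint A Q := by
  refine Set.disjoint_left.2 fun q hqA hqQ => ?_
  have hqa : q ≠ a := fun hqa => h.not_adj hqQ (hqa ▸ hab)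
  have := nontrivial_of_ne (⟨q, hqA⟩ : A) ⟨a, ha⟩ fun heq => hqa (congrArg Subtype.val heq)
  obtain ⟨v, hv⟩ := hA.preconnected.exists_adj_of_nontrivial ⟨q, hqA⟩
  exact h.not_adj hqQ hv

lemma connected_of_notMem (h : IsContraction G' G x Q) {A : Set V} (hA : (G'.induce A).Connected)
    (hx : x ∉ A) : (G.induce A).Connected := by
  refine hA.mono fun u v huv => ?_
  rcases h.adj_or huv with huv | ⟨rfl, -⟩ | ⟨rfl, -⟩
  exacts [huv, absurd u.2 hx, absurd v.2 hx]

lemma connected_union (h : IsContraction G' G x Q) {A : Set V} (hA : (G'.induce A).Connected)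
    (hx : x ∈ A) : (G.induce (A ∪ Q)).Connected := by
  have hxQ {q : V} (hq : q ∈ Q) :
      (G.induce (A ∪ Q)).Reachable ⟨x, Or.inl hx⟩ ⟨q, Or.inr hq⟩ :=
    (h.connected.preconnected ⟨x, Or.inl rfl⟩ ⟨q, Or.inr hq⟩).map
      (G.induceHomOfLE (Set.insert_subset (Or.inl hx) Set.subset_union_right)).toHom
  have hadj {u v : V} (hu : u ∈ A ∪ Q) (hv : v ∈ A ∪ Q) (huv : G.Adj u v) :
      (G.induce (A ∪ Q)).Reachable ⟨u, hu⟩ ⟨v, hv⟩ :=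
    Adj.reachable (G := G.induce (A ∪ Q)) (u := ⟨u, hu⟩) (v := ⟨v, hv⟩) huv
  have hstep ⦃u v : A⦄ (huv : (G'.induce A).Adj u v) :
      (G.induce (A ∪ Q)).Reachable ⟨u, Or.inl u.2⟩ ⟨v, Or.inl v.2⟩ := by
    obtain ⟨u, hu⟩ := u
    obtain ⟨v, hv⟩ := v
    rcases h.adj_or huv with huv | ⟨rfl, q, hq, hqv⟩ | ⟨rfl, q, hq, huq⟩
    · exact hadj _ _ huv
    · exact (hxQ hq).trans (hadj _ _ hqv)
    · exact (hadj _ _ huq).trans (hxQ hq).symm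
  have hfrom : ∀ v : ↥(A ∪ Q), (G.induce (A ∪ Q)).Reachable ⟨x, Or.inl hx⟩ v := by
    rintro ⟨v, hv | hv⟩
    · exact reachable_of_forall_adj (φ := fun a : A => (⟨a, Or.inl a.2⟩ : ↥(A ∪ Q))) hstep
        (hA.preconnected ⟨x, hx⟩ ⟨v, hv⟩)
    · exact hxQ hv
  exact (connected_iff_exists_forall_reachable _).2 ⟨_, hfrom⟩

lemma isMinorOf (h : IsContraction G' G x Q) (hH : ∀ w, ∃ w', H.Adj w w')
    (hHG : H.IsMinorOf G') : H.IsMinorOf G := by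
  classical
  obtain ⟨f, hconn, hdisj, hadj⟩ := hHG
  have hfQ (w : W) : Disjoint (f w) Q := by
    obtain ⟨w', hw⟩ := hH w
    obtain ⟨a, ha, b, -, hab⟩ := hadj hw
    exact h.disjoint_of_connected (hconn w) ha hab
  set f' : W → Set V := fun w => if x ∈ f w then f w ∪ Q else f w
  have hf' {w : W} {v : V} : v ∈ f' w ↔ v ∈ f w ∨ x ∈ f w ∧ v ∈ Q := by
    by_cases hx : x ∈ f w <;> simp [f', hx]
  refine ⟨f', fun w => ?_, fun w w' hne => Set.disjoint_left.2 fun v hv hv' => ?_,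
    fun w w' hw => ?_⟩
  · by_cases hx : x ∈ f w
    · rw [show f' w = f w ∪ Q from if_pos hx]
      exact h.connected_union (hconn w) hx
    · rw [show f' w = f w from if_neg hx]
      exact h.connected_of_notMem (hconn w) hx
  · have hff (u : V) (hu : u ∈ f w) : u ∉ f w' := Set.disjoint_left.1 (hdisj hne) hu
    rcases hf'.1 hv with hv | ⟨hx, hvQ⟩ <;> rcases hf'.1 hv' with hv' | ⟨hx', hvQ'⟩
    · exact hff v hv hv'
    · exact Set.disjoint_left.1 (hfQ w) hv hvQ'
    · exact Set.disjoint_left.1 (hfQ w') hv' hvQ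
    · exact hff x hx hx'
  · obtain ⟨a, ha, b, hb, hab⟩ := hadj hw
    rcases h.adj_or hab with hab | ⟨rfl, q, hq, hqb⟩ | ⟨rfl, q, hq, haq⟩
    · exact ⟨a, hf'.2 (Or.inl ha), b, hf'.2 (Or.inl hb), hab⟩
    · exact ⟨q, hf'.2 (Or.inr ⟨ha, hq⟩), b, hf'.2 (Or.inl hb), hqb⟩
    · exact ⟨a, hf'.2 (Or.inl ha), q, hf'.2 (Or.inr ⟨hb, hq⟩), haq⟩

lemma isPlanar (h : IsContraction G' G x Q) (hG : G.IsPlanar) : G'.IsPlanar := by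
  refine ⟨fun hK => hG.1 (h.isMinorOf (fun w => ?_) hK),
    fun hK => hG.2 (h.isMinorOf (fun w => ?_) hK)⟩
  · exact (exists_ne w).imp fun _ hne => hne.symm
  · rcases w with i | i
    exacts [⟨.inr i, by simp⟩, ⟨.inl i, by simp⟩]

end IsContraction

lemma isMinorOf_mono (hGG' : G' ≤ G) (h : H.IsMinorOf G') : H.IsMinorOf G := by
  obtain ⟨f, hconn, hdisj, hadj⟩ := h
  refine ⟨f, fun w => (hconn w).mono fun u v huv => hGG' huv, hdisj, fun w w' hw => ?_⟩
  obtain ⟨a, ha, b, hb, hab⟩ := hadj hw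
  exact ⟨a, ha, b, hb, hGG' hab⟩

lemma isPlanar_anti (hGG' : G' ≤ G) (hG : G.IsPlanar) : G'.IsPlanar :=
  ⟨fun hK => hG.1 (isMinorOf_mono hGG' hK), fun hK => hG.2 (isMinorOf_mono hGG' hK)⟩

end Contraction

section Torso

variable {V : Type*} {G : SimpleGraph V} {s A X D : Finset V}

/-- The induced subgraph on `A` with the vertices of `X` made pairwise adjacent. -/
def torso (G : SimpleGraph V) (A X : Finset V) : SimpleGraph V where
  Adj u v := u ≠ v ∧ (G.Adj u v ∧ u ∈ A ∧ v ∈ A ∨ u ∈ X ∧ v ∈ X)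
  symm := ⟨fun _ _ ⟨hne, h⟩ => ⟨hne.symm, h.imp (fun h => ⟨h.1.symm, h.2.symm⟩) And.symm⟩⟩
  loopless := ⟨fun _ h => h.1 rfl⟩

lemma support_torso_subset (hXA : X ⊆ A) : (torso G A X).support ⊆ A := by
  rintro u ⟨v, -, ⟨-, hu, -⟩ | ⟨hu, -⟩⟩
  exacts [hu, hXA hu]

/-- Every vertex of `X` has a neighbour on every side of a cut along `X`. -/
def IsTight (G : SimpleGraph V) (s X : Finset V) : Prop :=
  ∀ D, IsCut G s X D → ∀ x ∈ X, ∃ u ∈ D, G.Adj u x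

lemma IsCut.exists_isTight (h : IsCut G s X D) : ∃ X' ⊆ X, IsTight G s X' ∧
    ∃ D', IsCut G s X' D' := by
  classical
  induction X using Finset.strongInduction generalizing D with | H X ih =>
  by_cases htight : IsTight G s X
  · exact ⟨X, Subset.rfl, htight, D, h⟩
  simp only [IsTight, not_forall, not_exists, not_and] at htight
  obtain ⟨D', hD', x, hx, hnone⟩ := htight
  obtain ⟨X', hX', hrest⟩ := ih _ (erase_ssubset hx) (hD'.erase hnone)
  exact ⟨X', hX'.trans (erase_subset _ _), hrest⟩

lemma eq_of_forall_mem (hX : #X ≤ 2) {e f : Sym2 V} (he : ¬e.IsDiag) (hf : ¬f.IsDiag)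
    (heX : ∀ v ∈ e, v ∈ X) (hfX : ∀ v ∈ f, v ∈ X) : e = f := by
  classical
  have heq {g : Sym2 V} (hg : ¬g.IsDiag) (hgX : ∀ v ∈ g, v ∈ X) : g.toFinset = X :=
    eq_of_subset_of_card_le (fun v hv => hgX v (Sym2.mem_toFinset.1 hv))
      (hX.trans_eq (Sym2.card_toFinset_of_not_isDiag g hg).symm)
  refine Sym2.ext fun v => ?_
  rw [← Sym2.mem_toFinset, heq he heX, ← Sym2.mem_toFinset, heq hf hfX]

variable [DecidableEq V]

lemma IsTight.subset (h : IsTight G s X) (hD : IsCut G s X D) (hs : G.support ⊆ s) : X ⊆ s \ D :=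
  fun x hx => by
    obtain ⟨u, -, hu⟩ := h D hD x hx
    exact mem_sdiff.2 ⟨hs ⟨u, hu.symm⟩, fun hxD => disjoint_left.1 hD.disjoint hxD hx⟩

lemma IsTight.isPlanar_torso (h : IsTight G s X) (hX : #X ≤ 2) (hD : IsCut G s X D)
    (hG : G.IsPlanar) : (torso G (s \ D) X).IsPlanar := by
  rcases hX.lt_or_eq with hX | hX
  · refine isPlanar_anti (fun u v huv => ?_) hG
    rcases huv with ⟨hne, huv | ⟨hu, hv⟩⟩
    exacts [huv.1, absurd (card_le_one.1 (Nat.lt_succ_iff.1 hX) u hu v hv) hne]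
  obtain ⟨x, y, -, rfl⟩ := card_eq_two.1 hX
  obtain ⟨Q, hQ, hQD, hconn⟩ := hD.exists_connected
  obtain ⟨p, hp, hpx⟩ := h Q hQ x (by simp)
  obtain ⟨q, hq, hqy⟩ := h Q hQ y (by simp)
  refine IsContraction.isPlanar (x := x) (Q := Q) ⟨?_, fun u v hu huv => ?_, fun u v huv => ?_⟩ hG
  · rw [Set.insert_eq]
    exact connected_induce_union Preconnected.of_subsingleton hconn.preconnected
      (by simp : x ∈ _) hp hpx.symm
  · rcases huv.2 with ⟨-, hus, -⟩ | ⟨hux, -⟩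
    exacts [(mem_sdiff.1 hus).2 (hQD hu), disjoint_left.1 hQ.disjoint hu hux]
  · obtain ⟨hne, huv | ⟨hu, hv⟩⟩ := huv
    · exact Or.inl huv.1
    simp only [mem_insert, mem_singleton] at hu hv
    rcases hu with rfl | rfl <;> rcases hv with rfl | rfl
    exacts [absurd rfl hne, Or.inr (Or.inl ⟨rfl, q, hq, hqy⟩),
      Or.inr (Or.inr ⟨rfl, q, hq, hqy.symm⟩), absurd rfl hne]

lemma IsCut.le_sup_torso (hD : IsCut G s X D) (hs : G.support ⊆ s) :
    G ≤ torso G (s \ D) X ⊔ torso G (s \ ((s \ X) \ D)) X := fun u v huv => by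
  have hus := hs ⟨v, huv⟩
  have hvs := hs ⟨u, huv.symm⟩
  have hclosed := @hD.closed u v
  have hclosed' := @hD.closed v u
  have hvu := huv.symm
  have hne := huv.ne
  simp only [torso, sup_adj, mem_sdiff]
  tauto

variable [Fintype V]

lemma IsMacLane.of_torso {A B : Finset V} (hX : #X ≤ 2) (hXA : X ⊆ A) (hXB : X ⊆ B)
    (hAB : A ∩ B ⊆ X) (hle : G ≤ torso G A X ⊔ torso G B X) (hA : IsMacLane (torso G A X))
    (hB : IsMacLane (torso G B X)) : IsMacLane G := by
  have hmem {u : V} (hu : u ∈ (torso G A X).support ∩ (torso G B X).support) : u ∈ X :=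
    hAB (mem_inter.2 ⟨support_torso_subset hXA hu.1, support_torso_subset hXB hu.2⟩)
  have hedge {f : Sym2 V} (hf : f ∈ (torso G A X).edgeSet) (hf' : f ∈ (torso G B X).edgeSet) :
      ∀ v ∈ f, v ∈ X := by
    rintro v ⟨w, rfl⟩
    exact hmem ⟨⟨w, hf⟩, ⟨w, hf'⟩⟩
  have hreach : ∀ u ∈ (torso G A X).support ∩ (torso G B X).support,
      ∀ v ∈ (torso G A X).support ∩ (torso G B X).support,
        (torso G A X ⊓ torso G B X).Reachable u v := fun u hu v hv => by
    rcases eq_or_ne u v with rfl | hne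
    · rfl
    · exact Adj.reachable ⟨⟨hne, Or.inr ⟨hmem hu, hmem hv⟩⟩, ⟨hne, Or.inr ⟨hmem hu, hmem hv⟩⟩⟩
  by_cases hcommon : ∃ e ∈ (torso G A X).edgeSet, e ∈ (torso G B X).edgeSet
  · obtain ⟨e, he, he'⟩ := hcommon
    refine (hA.sup hB hreach e fun f hf hf' => ?_).anti hle
    exact eq_of_forall_mem hX (not_isDiag_of_mem_edgeSet _ hf) (not_isDiag_of_mem_edgeSet _ he)
      (hedge hf hf') (hedge he he')
  · rcases isEmpty_or_nonempty V with _ | ⟨⟨o⟩⟩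
    · exact (Subsingleton.elim (torso G A X) G) ▸ hA
    · exact (hA.sup hB hreach s(o, o) fun f hf hf' => (hcommon ⟨f, hf, hf'⟩).elim).anti hle

lemma IsMacLane.of_isCut (hs : G.support ⊆ s) (hD : IsCut G s X D) (hX : #X ≤ 2)
    (hG : G.IsPlanar)
    (ih : ∀ t ⊂ s, ∀ H : SimpleGraph V, H.support ⊆ t → H.IsPlanar → IsMacLane H) :
    IsMacLane G := by
  obtain ⟨X', hX', htight, D', hD'⟩ := hD.exists_isTight
  replace hX := (card_le_card hX').trans hX
  have hside {D : Finset V} (hD : IsCut G s X' D) : IsMacLane (torso G (s \ D) X') :=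
    ih _ (sdiff_ssubset hD.subset hD.nonempty) _ (support_torso_subset (htight.subset hD hs))
      (htight.isPlanar_torso hX hD hG)
  have hinter : (s \ D') ∩ (s \ ((s \ X') \ D')) ⊆ X' := fun v hv => by
    simp only [mem_inter, mem_sdiff] at hv
    tauto
  exact .of_torso hX (htight.subset hD' hs) (htight.subset (hD'.compl hs) hs) hinter
    (hD'.le_sup_torso hs) (hside hD') (hside (hD'.compl hs))

end Torso

section FourVertices

variable {V : Type*} [Fintype V] [DecidableEq V] {G : SimpleGraph V} {s : Finset V}

lemma hasCycleCover_bot : HasCycleCover (⊥ : SimpleGraph V) fun _ => 0 := by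
  refine ⟨Empty, inferInstance, Empty.elim, ?_, fun e => by simp [coverage]⟩
  rw [Set.range_eq_empty, Submodule.span_empty, eq_comm, eq_bot_iff]
  exact fun z hz => funext fun e => hz.1 e (by simp)

-- A star, to which the three remaining edges are added one triangle at a time.
lemma IsMacLane.of_support_subset_four {a b c d : V} (hab : a ≠ b) (hac : a ≠ c) (had : a ≠ d)
    (hbc : b ≠ c) (hbd : b ≠ d) (hcd : c ≠ d) (hs : G.support ⊆ {a, b, c, d}) : IsMacLane G := by
  set K : SimpleGraph V := ⊥ ⊔ edge a d ⊔ edge b d ⊔ edge c d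
  have hK : HasCycleCover K fun _ => 0 := by
    refine ((hasCycleCover_bot.congr (cycleSpace_sup_edge_of_isolated ?_ d)).congr
      (cycleSpace_sup_edge_of_isolated ?_ d)).congr (cycleSpace_sup_edge_of_isolated ?_ d) <;>
    simp [edge_adj, *, Ne.symm]
  have hKd {v : V} (hv : v = a ∨ v = b ∨ v = c) : K.Adj v d := by
    rcases hv with rfl | rfl | rfl <;> simp [K, edge_adj, *]
  have had' : K.Adj a d := hKd (by simp)
  have hbd' : K.Adj b d := hKd (by simp)
  have hcd' : K.Adj c d := hKd (by simp)
  have h := ((hK.sup_edge hab (.cons had' (.cons hbd'.symm .nil))).sup_edge hbc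
    (.cons (Or.inl hbd') (.cons (Or.inl hcd'.symm) .nil))).sup_edge hac
    (.cons (Or.inl (Or.inl had')) (.cons (Or.inl (Or.inl hcd'.symm)) .nil))
  refine IsMacLane.anti (h.mono fun e _ => ?_) fun u v huv => ?_
  · have hnodup : [s(a, b), s(a, c), s(b, c), s(a, d), s(b, d), s(c, d)].Nodup := by
      simp [hab, hac, had, hbc, hbd, hcd, hab.symm, hac.symm, hbc.symm]
    have hcount := List.nodup_iff_count_le_one.1 hnodup e
    simp only [Walk.edges_cons, Walk.edges_nil, List.count_cons, List.count_nil,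
      Sym2.eq_swap (a := d)] at hcount ⊢
    omega
  · have hu := hs ⟨v, huv⟩
    have hv := hs ⟨u, huv.symm⟩
    have := huv.ne
    simp only [Set.mem_insert_iff, Set.mem_singleton_iff] at hu hv
    rcases hu with rfl | rfl | rfl | rfl <;> rcases hv with rfl | rfl | rfl | rfl <;>
      simp_all [edge_adj, adj_comm]

lemma IsMacLane.of_card_le_four (hs : G.support ⊆ s) (h4 : #s ≤ 4) : IsMacLane G := by
  by_cases hV : 4 ≤ Fintype.card V
  · obtain ⟨t, hst, ht⟩ := exists_superset_card_eq h4 hV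
    obtain ⟨a, b, c, d, hab, hac, had, hbc, hbd, hcd, rfl⟩ := card_eq_four.1 ht
    exact of_support_subset_four hab hac had hbc hbd hcd
      (hs.trans (by simpa using coe_subset.2 hst))
  · obtain ⟨φ⟩ : Nonempty (V ↪ Fin 4) := Function.Embedding.nonempty_of_card_le (by simp; omega)
    have h4 : IsMacLane (⊤ : SimpleGraph (Fin 4)) :=
      of_support_subset_four (a := 0) (b := 1) (c := 2) (d := 3) (by decide) (by decide) (by decide)
        (by decide) (by decide) (by decide) fun v _ => by fin_cases v <;> simp
    refine h4.of_isMinorOf ⟨fun v => {φ v}, fun v => ?_, fun u v huv => ?_, fun u v huv => ?_⟩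
    · exact (connected_iff _).2 ⟨.of_subsingleton, inferInstance⟩
    · simpa using huv
    · simpa using huv.ne

end FourVertices

section ContractibleEdge

variable {V : Type*} [DecidableEq V] {G : SimpleGraph V} {s D : Finset V} {x y z : V}

lemma IsCut.exists_ssubset (h2 : ∀ X D, #X ≤ 2 → ¬IsCut G s X D) (hxy : G.Adj x y)
    (hD : IsCut G s {x, y, z} D) (hs : G.support ⊆ s)
    (hnext : ∀ a b, G.Adj a b → ∃ c D, IsCut G s {a, b, c} D) :
    ∃ a b c D', G.Adj a b ∧ IsCut G s {a, b, c} D' ∧ D' ⊂ D := by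
  have hnbr {X D : Finset V} {v : V} (hX : #X ≤ 3) (hv : v ∈ X) (hD : IsCut G s X D) :
      ∃ u ∈ D, G.Adj u v := by
    by_contra! hnone
    exact h2 _ _ (by rw [card_erase_of_mem hv]; omega) (hD.erase hnone)
  obtain ⟨v, hvD, hvz⟩ := hnbr card_le_three (by simp : z ∈ _) hD
  obtain ⟨w, D₁, hD₁, hx, hy⟩ : ∃ w D₁, IsCut G s {z, v, w} D₁ ∧ x ∉ D₁ ∧ y ∉ D₁ := by
    obtain ⟨w, D₁, hD₁⟩ := hnext z v hvz.symm
    by_cases hxD : x ∈ D₁ ∨ y ∈ D₁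
    · refine ⟨w, _, hD₁.compl hs, ?_⟩
      have h1 := @hD₁.closed x y
      have h2 := @hD₁.closed y x
      have := hxy.symm
      simp only [mem_sdiff]
      tauto
    · exact ⟨w, D₁, hD₁, not_or.1 hxD⟩
  obtain ⟨u, hu, huv⟩ := hnbr card_le_three (by simp : v ∈ _) hD₁
  have hD₁X {a : V} (ha : a ∈ D₁) : a ∉ ({x, y, z} : Finset V) := by
    have := disjoint_left.1 hD₁.disjoint ha
    rintro h
    simp only [mem_insert, mem_singleton] at h this
    rcases h with rfl | rfl | rfl <;> tauto
  have hvD₁ : v ∉ D₁ := fun hv => disjoint_left.1 hD₁.disjoint hv (by simp)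
  obtain ⟨a, has, haX, haD₁⟩ := hD₁.exists_notMem
  refine ⟨z, v, w, D₁ ∩ D, hvz.symm, ⟨⟨u, ?_⟩, inter_subset_right.trans hD.subset,
    hD₁.disjoint.mono_left inter_subset_left, ⟨a, has, haX, fun h => haD₁ (mem_inter.1 h).1⟩,
    fun a b ha hab => ?_⟩, ?_⟩
  · exact mem_inter.2 ⟨hu, (hD.closed hvD huv.symm).resolve_right (hD₁X hu)⟩
  · obtain ⟨ha₁, ha⟩ := mem_inter.1 ha
    exact (hD₁.closed ha₁ hab).imp_left fun hb =>
      mem_inter.2 ⟨hb, (hD.closed ha hab).resolve_right (hD₁X hb)⟩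
  · exact inter_subset_right.ssubset_of_not_subset fun h => hvD₁ (mem_inter.1 (h hvD)).1

-- Every edge in a cut of size three would give a descending sequence of sides.
lemma exists_adj_forall_not_isCut (hs : G.support ⊆ s) (hcard : 2 ≤ #s)
    (h2 : ∀ X D, #X ≤ 2 → ¬IsCut G s X D) :
    ∃ x y, G.Adj x y ∧ ∀ z D, ¬IsCut G s {x, y, z} D := by
  by_contra! hnext
  have hdescent (D : Finset V) : ∀ x y z, G.Adj x y → ¬IsCut G s {x, y, z} D := by
    induction D using Finset.strongInduction with | H D ih =>
    intro x y z hxy hD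
    obtain ⟨a, b, c, D', hab, hD', hlt⟩ := hD.exists_ssubset h2 hxy hs hnext
    exact ih D' hlt a b c hab hD'
  obtain ⟨u, hu, v, hv, huv⟩ := one_lt_card.1 hcard
  obtain ⟨w, huw⟩ : ∃ w, G.Adj u w := by
    by_contra! hu'
    exact h2 ∅ {u} (by simp) ⟨⟨u, by simp⟩, by simpa, by simp,
      ⟨v, hv, by simp, by simpa using huv.symm⟩,
      fun a b ha hab => (hu' b (mem_singleton.1 ha ▸ hab)).elim⟩
  obtain ⟨z, D, hD⟩ := hnext u w huw
  exact hdescent D u w z huw hD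

end ContractibleEdge

/-! ### The cycle around a vertex -/

section Rotation

variable {V : Type*} {G : SimpleGraph V} {z : Sym2 V → ZMod 2} {e : Sym2 V} {u p q x : V}

lemma notMem_of_mem_edgeSet_deleteIncidenceSet
    (he : e ∈ (G.deleteIncidenceSet x).edgeSet) : x ∉ e := by
  induction e with | _ a b =>
  obtain ⟨-, ha, hb⟩ := deleteIncidenceSet_adj.1 he
  exact fun h => (Sym2.mem_iff.1 h).elim (fun h => ha h.symm) fun h => hb h.symm

lemma mem_edgeSet_deleteIncidenceSet :
    e ∈ (G.deleteIncidenceSet x).edgeSet ↔ e ∈ G.edgeSet ∧ x ∉ e :=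
  ⟨fun h => ⟨edgeSet_mono (deleteIncidenceSet_le G x) h,
    notMem_of_mem_edgeSet_deleteIncidenceSet h⟩, fun h => by
      rw [edgeSet_deleteIncidenceSet]
      exact ⟨h.1, fun hinc => h.2 hinc.2⟩⟩

variable [Fintype V] [DecidableEq V]

lemma sum_incident_eq_zero (hz : z ∈ cycleSpace G) (v : V) : ∑ e with v ∈ e, z e = 0 :=
  congrFun (LinearMap.mem_ker.1 hz.2) v

lemma exists_mem_cycleSpace_apply_eq (hp : G.Adj u p) (hq : G.Adj u q) (hpq : p ≠ q)
    (hr : (G.deleteIncidenceSet u).Reachable p q) :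
    ∃ z ∈ cycleSpace G, ∀ e, u ∈ e → z e = if e = s(u, p) ∨ e = s(u, q) then 1 else 0 := by
  obtain ⟨w⟩ := hr
  refine ⟨Pi.single s(u, p) 1 + Pi.single s(u, q) 1 + walkChain w,
    ⟨add_mem (add_mem (single_mem_edgeSpace hp) (single_mem_edgeSpace hq))
      (edgeSpace_mono (deleteIncidenceSet_le G u) (walkChain_mem_edgeSpace w)), ?_⟩,
    fun e he => ?_⟩
  · refine LinearMap.mem_ker.2 ?_
    rw [map_add, map_add, boundary_single hp.ne, boundary_single hq.ne, boundary_walkChain]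
    calc (Pi.single u 1 + Pi.single p 1 : V → ZMod 2) + (Pi.single u 1 + Pi.single q 1) +
          (Pi.single p 1 + Pi.single q 1)
        = (Pi.single u 1 + Pi.single u 1) + (Pi.single p 1 + Pi.single p 1) +
          (Pi.single q 1 + Pi.single q 1) := by abel
      _ = 0 := by simp only [chain_add_self, add_zero]
  · have hw : walkChain w e = 0 :=
      walkChain_mem_edgeSpace w e fun h => notMem_of_mem_edgeSet_deleteIncidenceSet h he
    have hne : s(u, p) ≠ s(u, q) := fun h => hpq (Sym2.congr_right.1 h)
    rw [Pi.add_apply, Pi.add_apply, hw, add_zero, Pi.single_apply, Pi.single_apply]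
    by_cases hep : e = s(u, p)
    · simp [hep, hne]
    · simp [hep]

lemma exists_other_of_mem_cycleSpace (hz : z ∈ cycleSpace G) (hp : z s(u, p) ≠ 0) :
    ∃ q ≠ p, z s(u, q) ≠ 0 := by
  by_contra! h
  refine hp ?_
  rw [← sum_incident_eq_zero hz u, sum_eq_single s(u, p)]
  · intro e he hep
    obtain ⟨q, rfl⟩ := (mem_filter_univ _).1 he
    exact h q fun hqp => hep (hqp ▸ rfl)
  · simp

lemma exists_apply_ne_zero_of_span_eq {ι : Type*} {c : ι → Sym2 V → ZMod 2}
    (hc : Submodule.span (ZMod 2) (Set.range c) = cycleSpace G) (hz : z ∈ cycleSpace G)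
    (he : z e ≠ 0) : ∃ i, c i e ≠ 0 := by
  obtain ⟨S, rfl⟩ := exists_eq_sum hc hz
  rw [Finset.sum_apply] at he
  obtain ⟨i, -, hi⟩ := exists_ne_zero_of_sum_ne_zero he
  exact ⟨i, hi⟩

open Classical in
lemma sum_incident_inter_eq_zero {ι : Type*} {c : ι → Sym2 V → ZMod 2} {P : Set (Sym2 V)}
    (hc : Submodule.span (ZMod 2) (Set.range c) = cycleSpace G)
    (hP : ∀ i, (∀ e, u ∈ e → c i e ≠ 0 → e ∈ P) ∨ ∀ e, u ∈ e → c i e ≠ 0 → e ∉ P)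
    (hz : z ∈ cycleSpace G) : ∑ e with u ∈ e ∧ e ∈ P, z e = 0 := by
  let φ : (Sym2 V → ZMod 2) →ₗ[ZMod 2] ZMod 2 := ∑ e with u ∈ e ∧ e ∈ P, LinearMap.proj e
  have hφ (z : Sym2 V → ZMod 2) : φ z = ∑ e with u ∈ e ∧ e ∈ P, z e := by
    simp only [φ, LinearMap.sum_apply, LinearMap.proj_apply]
  rw [← hφ]
  suffices hker : cycleSpace G ≤ LinearMap.ker φ from LinearMap.mem_ker.1 (hker hz)
  rw [← hc, Submodule.span_le]
  rintro _ ⟨i, rfl⟩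
  have hi : c i ∈ cycleSpace G := hc ▸ Submodule.subset_span ⟨i, rfl⟩
  refine LinearMap.mem_ker.2 ((hφ _).trans ?_)
  rcases hP i with h | h
  · rw [← sum_incident_eq_zero hi u, ← filter_filter, sum_filter]
    exact sum_congr rfl fun e he => ite_eq_left_iff.2 fun heP =>
      (not_imp_comm.1 (h e (mem_filter.1 he).2) heP).symm
  · refine sum_eq_zero fun e he => ?_
    obtain ⟨hue, heP⟩ := (mem_filter_univ _).1 he
    exact not_imp_comm.1 (h e hue) (not_not.2 heP)

-- The number of edges at `u` in `P`, modulo `2`, vanishes on the cycle space, in particular on a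
-- closed walk that visits `u` once, between `p` and `q`.
lemma mem_iff_mem_of_span_eq {ι : Type*} {c : ι → Sym2 V → ZMod 2} {P : Set (Sym2 V)}
    (hc : Submodule.span (ZMod 2) (Set.range c) = cycleSpace G)
    (hP : ∀ i, (∀ e, u ∈ e → c i e ≠ 0 → e ∈ P) ∨ ∀ e, u ∈ e → c i e ≠ 0 → e ∉ P)
    (hp : G.Adj u p) (hq : G.Adj u q) (hr : (G.deleteIncidenceSet u).Reachable p q) :
    s(u, p) ∈ P ↔ s(u, q) ∈ P := by
  classical
  rcases eq_or_ne p q with rfl | hpq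
  · rfl
  obtain ⟨z, hz, hze⟩ := exists_mem_cycleSpace_apply_eq hp hq hpq hr
  have hne : s(u, p) ≠ s(u, q) := fun h => hpq (Sym2.congr_right.1 h)
  have hsum : ∑ e ∈ {s(u, p), s(u, q)}, (if e ∈ P then 1 else 0 : ZMod 2) = 0 := by
    refine Eq.trans ?_ (sum_incident_inter_eq_zero hc hP hz)
    rw [sum_filter, ← univ_inter {s(u, p), s(u, q)},
      ← sum_ite_mem]
    refine sum_congr rfl fun e _ => ?_
    by_cases hue : u ∈ e
    · rw [hze e hue]
      by_cases heP : e ∈ P <;> simp [hue, heP]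
    · have hmem : e ∉ ({s(u, p), s(u, q)} : Finset (Sym2 V)) := fun h => hue <| by
        rcases mem_insert.1 h with rfl | h
        exacts [Sym2.mem_mk_left u p, mem_singleton.1 h ▸ Sym2.mem_mk_left u q]
      rw [if_neg hmem, if_neg fun h => hue h.1]
  rw [sum_pair hne] at hsum
  by_cases h1 : s(u, p) ∈ P <;> by_cases h2 : s(u, q) ∈ P <;> simp [h1, h2] at hsum ⊢

end Rotation

section Link

variable {V : Type*} {G : SimpleGraph V} {s : Finset V} {e : Sym2 V} {p q r u v x : V}

/-- Deleting a vertex does not disconnect its neighbours from each other. -/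
def HasNoCutVertex (G : SimpleGraph V) : Prop :=
  ∀ ⦃u p q⦄, G.Adj u p → G.Adj u q → (G.deleteIncidenceSet u).Reachable p q

/-- `G` is 2-connected as a graph on the vertex set `s`. -/
structure IsTwoConnectedOn (G : SimpleGraph V) (s : Finset V) : Prop where
  support_subset : G.support ⊆ s
  three_le_card : 3 ≤ #s
  not_isCut (X D : Finset V) (hX : #X ≤ 1) : ¬IsCut G s X D

namespace IsTwoConnectedOn

lemma reachable (h : IsTwoConnectedOn G s) (hp : p ∈ s) (hq : q ∈ s) : G.Reachable p q :=
  reachable_of_forall_not_isCut h.support_subset (fun D => h.not_isCut ∅ D (by simp))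
    (fun _ _ hab _ _ => hab) hp (notMem_empty p) hq (notMem_empty q)

lemma hasNoCutVertex (h : IsTwoConnectedOn G s) : HasNoCutVertex G := fun u p q hp hq =>
  reachable_of_forall_not_isCut h.support_subset (fun D => h.not_isCut {u} D (by simp))
    (fun a b hab ha hb => deleteIncidenceSet_adj.2
      ⟨hab, fun h => ha (mem_singleton.2 h), fun h => hb (mem_singleton.2 h)⟩)
    (h.support_subset ⟨u, hp.symm⟩) (fun h => hp.ne' (mem_singleton.1 h))
    (h.support_subset ⟨u, hq.symm⟩) fun h => hq.ne' (mem_singleton.1 h)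

lemma exists_adj_ne (h : IsTwoConnectedOn G s) (hp : p ∈ s) (hpr : p ≠ r) :
    ∃ q ≠ r, G.Adj p q := by
  classical
  by_contra! hq
  obtain ⟨t, hts, ht⟩ : ∃ t ∈ s, t ∉ ({p, r} : Finset V) :=
    exists_mem_notMem_of_card_lt_card (card_le_two.trans_lt h.three_le_card)
  simp only [mem_insert, mem_singleton, not_or] at ht
  refine h.not_isCut {r} {p} (by simp) ⟨singleton_nonempty p, singleton_subset_iff.2 hp,
    by simpa using hpr, ⟨t, hts, by simpa using ht.2, by simpa using ht.1⟩, fun u v hu huv => ?_⟩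
  rw [mem_singleton.1 hu] at huv
  exact Or.inr (mem_singleton.2 (by_contra fun hvr => hq v hvr huv))

end IsTwoConnectedOn

variable [Fintype V] [DecidableEq V]

lemma IsTwoConnectedOn.exists_mem_cycleSpace (h : IsTwoConnectedOn G s) (he : e ∈ G.edgeSet) :
    ∃ z ∈ cycleSpace G, z e ≠ 0 := by
  induction e with | _ p r =>
  have hpr : G.Adj p r := he
  obtain ⟨q, hqr, hpq⟩ := h.exists_adj_ne (h.support_subset ⟨r, hpr⟩) hpr.ne
  obtain ⟨z, hz, hze⟩ := exists_mem_cycleSpace_apply_eq hpr hpq hqr.symm (h.hasNoCutVertex hpr hpq)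
  exact ⟨z, hz, by rw [hze _ (Sym2.mem_mk_left p r), if_pos (Or.inl rfl)]; exact one_ne_zero⟩

variable {ι : Type*} {c : ι → Sym2 V → ZMod 2} {S : Finset ι}

lemma HasNoCutVertex.mem_of_reachable (hG : HasNoCutVertex G)
    (hc : Submodule.span (ZMod 2) (Set.range c) = cycleSpace G) {P : Set (Sym2 V)}
    (hP : ∀ i, (∀ e, c i e ≠ 0 → e ∈ P) ∨ ∀ e, c i e ≠ 0 → e ∉ P)
    (huv : G.Adj u v) (hmem : s(u, v) ∈ P) (hup : G.Reachable u p) (hpq : G.Adj p q) :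
    s(p, q) ∈ P := by
  have hrot {a b d : V} (hb : G.Adj a b) (hd : G.Adj a d) (h : s(a, b) ∈ P) : s(a, d) ∈ P :=
    (mem_iff_mem_of_span_eq hc (fun i => (hP i).imp (fun h e _ => h e) fun h e _ => h e)
      hb hd (hG hb hd)).1 h
  obtain ⟨w⟩ := hup
  induction w generalizing v with
  | nil => exact hrot huv hpq hmem
  | cons h _ ih => exact ih h.symm (Sym2.eq_swap ▸ hrot huv h hmem) hpq

variable [Fintype ι]

lemma IsFaceSystem.forall_mem_or_forall_notMem (hc : IsFaceSystem G c)
    (hx : ∀ ⦃p q⦄, G.Adj x p → G.Adj x q → (G.deleteIncidenceSet x).Reachable p q)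
    (hS : ∀ e, x ∈ e → (∑ i ∈ S, c i) e = 0) :
    (∀ i e, x ∈ e → c i e ≠ 0 → i ∈ S) ∨ ∀ i e, x ∈ e → c i e ≠ 0 → i ∉ S := by
  set P : Set (Sym2 V) := {e | ∃ j ∈ S, c j e ≠ 0}
  have hsep (i : ι) (hi : i ∉ S) (e : Sym2 V) (hxe : x ∈ e) (hie : c i e ≠ 0) : e ∉ P :=
    fun ⟨j, hjS, hj⟩ => sum_apply_ne_zero (hc.coverage_le e) hj hie hjS hi (hS e hxe)
  have hP (i : ι) : (∀ e, x ∈ e → c i e ≠ 0 → e ∈ P) ∨ ∀ e, x ∈ e → c i e ≠ 0 → e ∉ P :=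
    (em (i ∈ S)).imp (fun hi e _ he => ⟨i, hi, he⟩) (hsep i)
  have hedge {i : ι} {p : V} (hp : c i s(x, p) ≠ 0) : G.Adj x p :=
    mem_edgeSet_of_mem_edgeSpace (hc.mem_cycleSpace i).1 hp
  refine or_iff_not_imp_right.2 fun hne i e hxe hie => by_contra fun hiS => ?_
  push Not at hne
  obtain ⟨j, f, hxf, hjf, hjS⟩ := hne
  obtain ⟨p, rfl⟩ := hxe
  obtain ⟨q, rfl⟩ := hxf
  exact hsep i hiS _ (Sym2.mem_mk_left x p) hie <| (mem_iff_mem_of_span_eq hc.span_eq hP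
    (hedge hjf) (hedge hie) (hx (hedge hjf) (hedge hie))).1 ⟨j, hjS, hjf⟩

-- If a sum of faces avoids `x`, then it contains all faces at `x` or none of them; in the first
-- case pass to the complementary faces.
lemma IsFaceSystem.span_deleteIncidenceSet (hc : IsFaceSystem G c)
    (hx : ∀ ⦃p q⦄, G.Adj x p → G.Adj x q → (G.deleteIncidenceSet x).Reachable p q) :
    Submodule.span (ZMod 2) (Set.range fun i : {i // ∀ e, x ∈ e → c i e = 0} => c i) =
      cycleSpace (G.deleteIncidenceSet x) := by
  classical
  refine le_antisymm (Submodule.span_le.2 ?_) fun z hz => ?_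
  · rintro _ ⟨⟨i, hi⟩, rfl⟩
    refine ⟨fun e he => ?_, (hc.mem_cycleSpace i).2⟩
    by_cases hxe : x ∈ e
    · exact hi e hxe
    · exact (hc.mem_cycleSpace i).1 e fun h => he (mem_edgeSet_deleteIncidenceSet.2 ⟨h, hxe⟩)
  obtain ⟨S, rfl⟩ := exists_eq_sum hc.span_eq (cycleSpace_mono (deleteIncidenceSet_le G x) hz)
  have hspan (T : Finset ι) (hT : ∀ i e, x ∈ e → c i e ≠ 0 → i ∉ T) : ∑ i ∈ T, c i ∈
      Submodule.span (ZMod 2) (Set.range fun i : {i // ∀ e, x ∈ e → c i e = 0} => c i) :=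
    sum_mem fun i hi => Submodule.subset_span
      ⟨⟨i, fun e hxe => by_contra fun hie => hT i e hxe hie hi⟩, rfl⟩
  rcases hc.forall_mem_or_forall_notMem hx (S := S) fun e hxe =>
    hz.1 e fun h => notMem_of_mem_edgeSet_deleteIncidenceSet h hxe with h | h
  · rw [← hc.sum_compl]
    exact hspan _ fun i e hxe hie hi => mem_compl.1 hi (h i e hxe hie)
  · exact hspan _ h

-- No generator contains edges from both inside and outside of the set of edges covered by the
-- generators that sum to `C`, so all of the nonzero generators occur in this sum.
lemma HasNoCutVertex.walkChain_eq_sum (hG : HasNoCutVertex G)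
    (hconn : ∀ a ∈ G.support, ∀ b ∈ G.support, G.Reachable a b)
    (hc : Submodule.span (ZMod 2) (Set.range c) = cycleSpace G) (h2 : ∀ e, coverage c e ≤ 2)
    {C : G.Walk v v} (hC : C.IsCycle) (hCc : ∀ e ∈ C.edges, (∑ i, c i) e ≠ 0) :
    walkChain C = ∑ i, c i := by
  classical
  obtain ⟨S, hS⟩ := exists_eq_sum hc (walkChain_mem_cycleSpace C)
  have hmem {e : Sym2 V} : e ∈ C.edges ↔ (∑ i ∈ S, c i) e ≠ 0 := by
    rw [← hS, walkChain_apply_of_isTrail hC.isTrail]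
    split_ifs with h <;> simp [h]
  set P : Set (Sym2 V) := {e | ∃ j ∈ S, c j e ≠ 0}
  have hsep (i : ι) (hi : i ∉ S) (e : Sym2 V) (hie : c i e ≠ 0) : e ∉ P := fun ⟨j, hjS, hj⟩ => by
    have hin := sum_apply_ne_zero (h2 e) hj hie hjS hi
    have hout := sum_apply_ne_zero (S := Sᶜ) (h2 e) hie hj (mem_compl.2 hi) (by simpa using hjS)
    refine hCc e (hmem.2 hin) ?_
    rw [← sum_add_sum_compl S, Pi.add_apply, eq_one_of_ne_zero hin, eq_one_of_ne_zero hout]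
    rfl
  obtain ⟨w, h, p, rfl⟩ := Walk.not_nil_iff.1 hC.not_nil
  have hstart : s(v, w) ∈ P := by
    have h0 := hmem.1 (List.mem_cons_self (a := s(v, w)) (l := p.edges))
    rw [Finset.sum_apply] at h0
    exact exists_ne_zero_of_sum_ne_zero h0
  rw [hS]
  refine sum_subset (subset_univ S) fun i _ hi => funext fun e => by_contra fun hie => ?_
  refine hsep i hi e hie ?_
  have he : e ∈ G.edgeSet := mem_edgeSet_of_mem_edgeSpace
    (hc ▸ Submodule.subset_span ⟨i, rfl⟩ : c i ∈ cycleSpace G).1 hie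
  induction e with | _ a b =>
  exact hG.mem_of_reachable hc (fun i => (em (i ∈ S)).imp (fun hi e he => ⟨i, hi, he⟩) (hsep i))
    h hstart (hconn v ⟨w, h⟩ a ⟨b, he⟩) he

-- A face at the edge from `x` to `p` leaves `p` along an edge of `G - x`, whose other face avoids
-- `x`.
lemma IsFaceSystem.exists_sum_apply_ne_zero (hc : IsFaceSystem G c)
    (hspan : Submodule.span (ZMod 2) (Set.range fun i : {i // ∀ e, x ∈ e → c i e = 0} => c i) =
      cycleSpace (G.deleteIncidenceSet x))
    (h : IsTwoConnectedOn (G.deleteIncidenceSet x) s) (hp : G.Adj x p) (hq : G.Adj x q)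
    (hpq : p ≠ q) (hr : (G.deleteIncidenceSet x).Reachable p q) :
    ∃ r, (∑ i : {i // ∀ e, x ∈ e → c i e = 0}, c i) s(p, r) ≠ 0 := by
  classical
  obtain ⟨z, hz, hze⟩ := exists_mem_cycleSpace_apply_eq hp hq hpq hr
  obtain ⟨i, hi⟩ : ∃ i, c i s(p, x) ≠ 0 := exists_apply_ne_zero_of_span_eq hc.span_eq hz <| by
    rw [Sym2.eq_swap, hze _ (Sym2.mem_mk_left x p), if_pos (Or.inl rfl)]
    exact one_ne_zero
  obtain ⟨r, hrx, hir⟩ := exists_other_of_mem_cycleSpace (hc.mem_cycleSpace i) hi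
  have hpr : (G.deleteIncidenceSet x).Adj p r := deleteIncidenceSet_adj.2
    ⟨mem_edgeSet_of_mem_edgeSpace (hc.mem_cycleSpace i).1 hir, hp.ne', hrx⟩
  obtain ⟨y, hy, hyr⟩ := h.exists_mem_cycleSpace (e := s(p, r)) hpr
  obtain ⟨j, hj⟩ := exists_apply_ne_zero_of_span_eq hspan hy hyr
  refine ⟨r, ?_⟩
  rw [Finset.sum_apply, sum_eq_single_of_mem j (mem_univ j) fun k _ hkj => by_contra fun hk => ?_]
  · exact hj
  obtain ⟨l, -, -, hl⟩ := hc.exists_other hir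
  have hne (k : {i // ∀ e, x ∈ e → c i e = 0}) : (k : ι) ≠ i := fun hki =>
    hi (hki ▸ k.2 _ (Sym2.mem_mk_right p x))
  exact hkj (Subtype.ext (((hl k hk).resolve_left (hne k)).trans
    ((hl j hj).resolve_left (hne j)).symm))

-- The sum of the faces that avoid `x` is a cycle through all neighbours of `x`.
lemma IsMacLane.exists_isCycle_deleteIncidenceSet (hG : IsMacLane G)
    (h : IsTwoConnectedOn (G.deleteIncidenceSet x) s) (hs : ∀ p, G.Adj x p → p ∈ s)
    (hp : G.Adj x p) (hq : G.Adj x q) (hpq : p ≠ q) :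
    ∃ (v : V) (C : (G.deleteIncidenceSet x).Walk v v), C.IsCycle ∧
      (∀ r, G.Adj x r → r ∈ C.support) ∧
      HasCycleCover (G.deleteIncidenceSet x) fun e => 2 - C.edges.count e := by
  classical
  obtain ⟨ι, _, c, hc⟩ := hG.exists_isFaceSystem
  have hx ⦃p q : V⦄ (hp : G.Adj x p) (hq : G.Adj x q) : (G.deleteIncidenceSet x).Reachable p q :=
    h.reachable (hs p hp) (hs q hq)
  have hspan := hc.span_deleteIncidenceSet hx
  set d : {i // ∀ e, x ∈ e → c i e = 0} → Sym2 V → ZMod 2 := fun i => c i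
  have hd (e : Sym2 V) : coverage d e ≤ 2 :=
    (coverage_comp_le Subtype.val_injective c e).trans (hc.coverage_le e)
  have hnbr (r : V) (hr : G.Adj x r) : ∃ t, (∑ i, d i) s(r, t) ≠ 0 := by
    obtain ⟨t, ht, htr⟩ : ∃ t, G.Adj x t ∧ r ≠ t := by
      rcases eq_or_ne r p with rfl | hrp
      exacts [⟨q, hq, hpq⟩, ⟨p, hp, hrp⟩]
    exact hc.exists_sum_apply_ne_zero hspan h hr ht htr (hx hr ht)
  have hsum : ∑ i, d i ∈ cycleSpace (G.deleteIncidenceSet x) :=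
    hspan ▸ sum_mem fun i _ => Submodule.subset_span ⟨i, rfl⟩
  obtain ⟨v, C, hC, hCd⟩ := exists_isCycle_of_mem_cycleSpace hsum fun h0 => by
    obtain ⟨t, ht⟩ := hnbr p hp
    exact ht (congrFun h0 _)
  have hCsum := h.hasNoCutVertex.walkChain_eq_sum
    (fun a ha b hb => h.reachable (h.support_subset ha) (h.support_subset hb)) hspan hd hC hCd
  have hmem {e : Sym2 V} : (∑ i, d i) e ≠ 0 ↔ e ∈ C.edges := by
    rw [← hCsum, walkChain_apply_of_isTrail hC.isTrail]
    split_ifs with h <;> simp [h]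
  refine ⟨v, C, hC, fun r hr => ?_, _, inferInstance, d, hspan, fun e => ?_⟩
  · obtain ⟨t, ht⟩ := hnbr r hr
    exact C.fst_mem_support_of_mem_edges (hmem.1 ht)
  · have hle := hd e
    change _ ≤ 2 - C.edges.count e
    by_cases he : e ∈ C.edges
    · rw [List.count_eq_one_of_mem hC.isTrail.edges_nodup he]
      have hodd := hmem.2 he
      rw [sum_apply_eq_coverage] at hodd
      have hne : coverage d e ≠ 2 := fun h2 => hodd (by rw [h2]; rfl)
      omega
    · rwa [List.count_eq_zero.2 he]

end Link

lemma exists_cycleEdges_eq {V : Type*} {G : SimpleGraph V} {v : V} {C : G.Walk v v}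
    (hC : C.IsCycle) :
    ∃ l : List V, l.Nodup ∧ cycleEdges l = C.edges ∧ ∀ w, w ∈ l ↔ w ∈ C.support := by
  obtain ⟨w, h, p, rfl⟩ := Walk.not_nil_iff.1 hC.not_nil
  have hsupp : p.support = p.support.dropLast ++ [v] := by
    rw [← List.dropLast_append_getLast p.support_ne_nil, Walk.getLast_support]
    simp
  have hperm : (p.support.dropLast ++ [v]).Perm (v :: p.support.dropLast) :=
    List.perm_append_singleton ..
  refine ⟨v :: p.support.dropLast, hperm.nodup_iff.1 (hsupp ▸ hC.support_nodup), ?_, fun u => ?_⟩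
  · rw [cycleEdges_cons, List.cons_append, ← hsupp, Walk.edges_eq_zipWith_support]
    rfl
  · have hu : u ∈ p.support ↔ u ∈ v :: p.support.dropLast := by rw [← hperm.mem_iff, ← hsupp]
    rw [Walk.support_cons, List.mem_cons (l := p.support), hu, List.mem_cons, or_self_left]

/-! ### Inserting an adjacent pair of vertices -/

section CyclicList

variable {α : Type*} {l : List α} {X Y : Set α}

/-- Two arcs with common ends `p` and `q` make up the cyclic list `l`, one of them missing `X` and
the other missing `Y` except perhaps at the ends. -/
def CyclicallySeparated (l : List α) (X Y : Set α) : Prop :=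
  ∃ p q a b, l ~r p :: (a ++ q :: b) ∧ (∀ v ∈ a, v ∉ Y) ∧ ∀ v ∈ b, v ∉ X

/-- The cyclic list `l` meets `X`, `Y`, `X`, `Y` in this order. -/
def CyclicallyInterlaced (l : List α) (X Y : Set α) : Prop :=
  ∃ x y x' y' a b c d, l ~r (x :: a) ++ (y :: b) ++ (x' :: c) ++ (y' :: d) ∧
    x ∈ X ∧ y ∈ Y ∧ x' ∈ X ∧ y' ∈ Y

/-- The cyclic list `l` meets `X ∩ Y` in three places. -/
def CyclicallyTripled (l : List α) (X Y : Set α) : Prop :=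
  ∃ u v w a b c, l ~r (u :: a) ++ (v :: b) ++ (w :: c) ∧ u ∈ X ∩ Y ∧ v ∈ X ∩ Y ∧ w ∈ X ∩ Y

lemma CyclicallySeparated.symm (h : CyclicallySeparated l X Y) : CyclicallySeparated l Y X := by
  obtain ⟨p, q, a, b, hl, ha, hb⟩ := h
  exact ⟨q, p, b, a, hl.trans (List.isRotated_append (l := p :: a) (l' := q :: b)), hb, ha⟩

lemma CyclicallyInterlaced.symm (h : CyclicallyInterlaced l X Y) : CyclicallyInterlaced l Y X := by
  obtain ⟨x, y, x', y', a, b, c, d, hl, hx, hy, hx', hy'⟩ := h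
  refine ⟨y, x', y', x, b, c, d, a, hl.trans ?_, hy, hx', hy', hx⟩
  simpa only [List.append_assoc] using
    List.isRotated_append (l := x :: a) (l' := (y :: b) ++ (x' :: c) ++ (y' :: d))

lemma exists_eq_append_cons_forall_notMem {x : α} (hx : x ∈ l) (hxX : x ∈ X) :
    ∃ a y b, l = a ++ y :: b ∧ y ∈ X ∧ ∀ v ∈ a, v ∉ X := by
  classical
  obtain ⟨y, hy⟩ := Option.isSome_iff_exists.1
    (List.find?_isSome.2 ⟨x, hx, decide_eq_true hxX⟩ : (l.find? (· ∈ X)).isSome)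
  obtain ⟨hyX, a, b, hl, ha⟩ := List.find?_eq_some_iff_append.1 hy
  exact ⟨a, y, b, hl, by simpa using hyX, by simpa using ha⟩

lemma exists_first_last {x x' : α} (hx : x ∈ l) (hxX : x ∈ X) (hx' : x' ∈ l) (hxX' : x' ∈ X)
    (hne : x ≠ x') : ∃ a y b z c, l = a ++ y :: (b ++ z :: c) ∧ y ∈ X ∧ z ∈ X ∧
      (∀ v ∈ a, v ∉ X) ∧ ∀ v ∈ c, v ∉ X := by
  obtain ⟨a, y, t, rfl, hy, ha⟩ := exists_eq_append_cons_forall_notMem hx hxX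
  obtain ⟨w, hw, hwX⟩ : ∃ w ∈ t, w ∈ X := by
    by_contra! ht
    have heq (v) (hv : v ∈ a ++ y :: t) (hvX : v ∈ X) : v = y := by
      rcases List.mem_append.1 hv with hv | hv
      · exact absurd hvX (ha v hv)
      · exact (List.mem_cons.1 hv).resolve_right fun hv => ht v hv hvX
    exact hne ((heq x hx hxX).trans (heq x' hx' hxX').symm)
  obtain ⟨c, z, b, ht, hz, hc⟩ := exists_eq_append_cons_forall_notMem (List.mem_reverse.2 hw) hwX
  refine ⟨a, y, b.reverse, z, c.reverse, ?_, hy, hz, ha, by simpa using hc⟩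
  rw [List.reverse_eq_iff.1 ht]
  simp

lemma cyclicallySeparated_or_interlaced {y : α} (hX : ∃ x ∈ X, ∃ x' ∈ X, x ∈ l ∧ x' ∈ l ∧ x ≠ x')
    (hy : y ∈ l) (hyY : y ∈ Y) (hyX : y ∉ X) :
    CyclicallySeparated l X Y ∨ CyclicallyInterlaced l X Y := by
  obtain ⟨l₁, l₂, rfl⟩ := List.append_of_mem hy
  have hrot : l₁ ++ y :: l₂ ~r y :: (l₂ ++ l₁) := List.isRotated_append
  obtain ⟨x, hx, x', hx', hxl, hxl', hne⟩ := hX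
  have hmem (v) (hv : v ∈ l₁ ++ y :: l₂) (hvX : v ∈ X) : v ∈ l₂ ++ l₁ :=
    (List.mem_cons.1 (hrot.mem_iff.1 hv)).resolve_left fun h => hyX (h ▸ hvX)
  obtain ⟨a, p, b, q, c, heq, hp, hq, ha, hc⟩ :=
    exists_first_last (hmem x hxl hx) hx (hmem x' hxl' hx') hx' hne
  rw [heq] at hrot
  by_cases hb : ∃ v ∈ b, v ∈ Y
  · obtain ⟨v, hv, hvY⟩ := hb
    obtain ⟨b₁, b₂, rfl⟩ := List.append_of_mem hv
    exact Or.inr (CyclicallyInterlaced.symm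
      ⟨y, p, v, q, a, b₁, b₂, c, by simpa using hrot, hyY, hp, hvY, hq⟩)
  · push Not at hb
    refine Or.inl ⟨p, q, b, c ++ y :: a, hrot.trans ?_, hb, ?_⟩
    · simpa using List.isRotated_append (l := y :: a) (l' := p :: (b ++ q :: c))
    · simp only [List.mem_append, List.mem_cons]
      rintro v (hv | rfl | hv)
      exacts [hc v hv, hyX, ha v hv]

lemma cyclicallySeparated_or_interlaced_or_tripled
    (hX : ∃ x ∈ X, ∃ x' ∈ X, x ∈ l ∧ x' ∈ l ∧ x ≠ x')
    (hY : ∃ y ∈ Y, ∃ y' ∈ Y, y ∈ l ∧ y' ∈ l ∧ y ≠ y') :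
    CyclicallySeparated l X Y ∨ CyclicallyInterlaced l X Y ∨ CyclicallyTripled l X Y := by
  by_cases hYX : ∃ y ∈ l, y ∈ Y ∧ y ∉ X
  · obtain ⟨y, hy, hyY, hyX⟩ := hYX
    exact (cyclicallySeparated_or_interlaced hX hy hyY hyX).imp_right Or.inl
  by_cases hXY : ∃ x ∈ l, x ∈ X ∧ x ∉ Y
  · obtain ⟨x, hx, hxX, hxY⟩ := hXY
    exact (cyclicallySeparated_or_interlaced hY hx hxX hxY).imp CyclicallySeparated.symm
      fun h => Or.inl h.symm
  push Not at hYX hXY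
  obtain ⟨x, hx, x', hx', hxl, hxl', hne⟩ := hX
  obtain ⟨a, p, b, q, c, rfl, hp, hq, ha, hc⟩ := exists_first_last hxl hx hxl' hx' hne
  have hrot : a ++ p :: (b ++ q :: c) ~r p :: (b ++ q :: (c ++ a)) := by
    simpa using List.isRotated_append (l := a) (l' := p :: (b ++ q :: c))
  by_cases hb : ∃ v ∈ b, v ∈ X
  · obtain ⟨v, hv, hvX⟩ := hb
    obtain ⟨b₁, b₂, rfl⟩ := List.append_of_mem hv
    exact Or.inr (Or.inr ⟨p, v, q, b₁, b₂, c ++ a, by simpa using hrot, ⟨hp, hXY p (by simp) hp⟩,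
      ⟨hvX, hXY v (by simp) hvX⟩, ⟨hq, hXY q (by simp) hq⟩⟩)
  · push Not at hb
    refine Or.inl ⟨p, q, b, c ++ a, hrot, fun v hv hvY => hb v hv (hYX v (by simp [hv]) hvY), ?_⟩
    simp only [List.mem_append]
    rintro v (hv | hv)
    exacts [hc v hv, ha v hv]

end CyclicList

section CyclicMinor

variable {V W : Type*} {G : SimpleGraph V} {H : SimpleGraph W} {l l' : List V} {x y : V}

/-- Some edge of `G` joins a vertex of `l` to a vertex of `l'`. -/
def Touches (G : SimpleGraph V) (l l' : List V) : Prop :=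
  ∃ u ∈ l, ∃ v ∈ l', G.Adj u v

lemma Touches.symm (h : Touches G l l') : Touches G l' l := by
  obtain ⟨u, hu, v, hv, huv⟩ := h
  exact ⟨v, hv, u, hu, huv.symm⟩

lemma touches_of_isChain {a b t : List V} (h : (x :: a ++ y :: t).IsChain G.Adj) :
    (x :: a).IsChain G.Adj ∧ Touches G (x :: a) (y :: b) ∧ (y :: t).IsChain G.Adj := by
  obtain ⟨ha, ht, hjoin⟩ := List.isChain_append.1 h
  exact ⟨ha, ⟨_, List.getLast_mem (List.cons_ne_nil x a), y, List.mem_cons_self,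
    hjoin _ (List.getLast_mem_getLast? _) y rfl⟩, ht⟩

lemma touches_singleton_cons (h : G.Adj x y) : Touches G [x] (y :: l) :=
  ⟨x, by simp, y, by simp, h⟩

lemma connected_induce_of_isChain (hl : l ≠ []) (h : l.IsChain G.Adj) :
    (G.induce {v | v ∈ l}).Connected := by
  have := (Walk.ofSupport l hl h).connected_induce_support
  rwa [Walk.support_ofSupport] at this

lemma isMinorOf_of_nodup_flatten {n : ℕ} (e : W ≃ Fin n) {b : Fin n → List V}
    (hnd : (List.ofFn b).flatten.Nodup) (hb : ∀ i, b i ≠ [] ∧ (b i).IsChain G.Adj)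
    (hH : ∀ w w', H.Adj w w' → Touches G (b (e w)) (b (e w'))) : H.IsMinorOf G := by
  refine ⟨fun w => {v | v ∈ b (e w)}, fun w => connected_induce_of_isChain (hb _).1 (hb _).2,
    fun w w' hne => ?_, hH⟩
  have hpw := List.pairwise_ofFn.1 (List.nodup_flatten.1 hnd).2
  refine Set.disjoint_left.2 fun v hv hv' => ?_
  rcases lt_or_gt_of_ne (e.injective.ne hne) with hlt | hlt
  · exact hpw hlt hv hv'
  · exact hpw hlt hv' hv

lemma isChain_iff_pathEdges : l.IsChain G.Adj ↔ ∀ e ∈ pathEdges l, e ∈ G.edgeSet := by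
  induction l with
  | nil => simp [pathEdges]
  | cons a l ih =>
    cases l with
    | nil => simp
    | cons b l => simp [ih]

lemma isChain_of_cycleEdges (h : ∀ e ∈ cycleEdges (x :: l), e ∈ G.edgeSet) :
    (x :: l ++ [x]).IsChain G.Adj :=
  isChain_iff_pathEdges.2 (cycleEdges_cons (x := x) (l := l) ▸ h)

lemma completeBipartiteGraph_isMinorOf_of_touches {n k : ℕ} {A : Fin n → List V}
    {B : Fin k → List V}
    (hnd : ((List.ofFn A).flatten ++ (List.ofFn B).flatten).Nodup)
    (hA : ∀ i, A i ≠ [] ∧ (A i).IsChain G.Adj) (hB : ∀ j, B j ≠ [] ∧ (B j).IsChain G.Adj)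
    (hAB : ∀ i j, Touches G (A i) (B j)) :
    (completeBipartiteGraph (Fin n) (Fin k)).IsMinorOf G := by
  refine isMinorOf_of_nodup_flatten finSumFinEquiv (b := Fin.append A B)
    (by rwa [List.ofFn_fin_append, List.flatten_append]) (Fin.addCases (fun i => ?_) fun i => ?_) ?_
  · rintro (i | i) (j | j) hij
    · simp at hij
    · rw [finSumFinEquiv_apply_left, finSumFinEquiv_apply_right, Fin.append_left, Fin.append_right]
      exact hAB i j
    · rw [finSumFinEquiv_apply_left, finSumFinEquiv_apply_right, Fin.append_left, Fin.append_right]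
      exact (hAB j i).symm
    · simp at hij
  · rw [Fin.append_left]
    exact hA i
  · rw [Fin.append_right]
    exact hB i

lemma CyclicallyInterlaced.completeBipartiteGraph_isMinorOf
    (h : CyclicallyInterlaced l (G.neighborSet x) (G.neighborSet y)) (hxy : G.Adj x y)
    (hx : x ∉ l) (hy : y ∉ l) (hnd : l.Nodup) (hl : ∀ e ∈ cycleEdges l, e ∈ G.edgeSet) :
    (completeBipartiteGraph (Fin 3) (Fin 3)).IsMinorOf G := by
  obtain ⟨u, v, u', v', a, b, c, d, hrot, hu, hv, hu', hv'⟩ := h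
  have hchain : (u :: a ++ v :: (b ++ u' :: (c ++ v' :: (d ++ [u])))).IsChain G.Adj := by
    simpa using isChain_of_cycleEdges (x := u) (l := a ++ (v :: b) ++ (u' :: c) ++ (v' :: d))
      fun e he => hl e ((cycleEdges_perm hrot).mem_iff.2 he)
  obtain ⟨hA, hAB, hchain⟩ := touches_of_isChain (b := b) hchain
  obtain ⟨hB, hBC, hchain⟩ := touches_of_isChain (b := c) hchain
  obtain ⟨hC, hCD, hchain⟩ := touches_of_isChain (b := d) hchain
  obtain ⟨hD, hDA, -⟩ := touches_of_isChain (b := a) hchain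
  have hnd' : ([[x], v :: b, v' :: d, [y], u :: a, u' :: c].flatten).Nodup := by
    have hperm : ([[x], v :: b, v' :: d, [y], u :: a, u' :: c].flatten).Perm
        (x :: y :: ((u :: a) ++ (v :: b) ++ (u' :: c) ++ (v' :: d))) := by
      classical
      refine List.perm_iff_count.2 fun w => ?_
      simp only [List.flatten_cons, List.flatten_nil, List.count_append, List.count_cons,
        List.count_nil]
      omega
    rw [hperm.nodup_iff, List.nodup_cons, List.nodup_cons, List.mem_cons, ← hrot.mem_iff,
      ← hrot.mem_iff, ← hrot.nodup_iff]
    exact ⟨not_or.2 ⟨hxy.ne, hx⟩, hy, hnd⟩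
  have htouch (i j : Fin 3) :
      Touches G (![[x], v :: b, v' :: d] i) (![[y], u :: a, u' :: c] j) := by
    fin_cases i <;> fin_cases j
    exacts [touches_singleton_cons hxy, touches_singleton_cons hu, touches_singleton_cons hu',
      (touches_singleton_cons hv).symm, hAB.symm, hBC, (touches_singleton_cons hv').symm, hDA,
      hCD.symm]
  exact completeBipartiteGraph_isMinorOf_of_touches (by simpa using hnd')
    (by simp [Fin.forall_fin_succ, hB, hD]) (by simp [Fin.forall_fin_succ, hA, hC]) htouch

lemma CyclicallyTripled.completeGraph_isMinorOf
    (h : CyclicallyTripled l (G.neighborSet x) (G.neighborSet y)) (hxy : G.Adj x y)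
    (hx : x ∉ l) (hy : y ∉ l) (hnd : l.Nodup) (hl : ∀ e ∈ cycleEdges l, e ∈ G.edgeSet) :
    (completeGraph (Fin 5)).IsMinorOf G := by
  obtain ⟨u, v, w, a, b, c, hrot, ⟨hux, huy⟩, ⟨hvx, hvy⟩, ⟨hwx, hwy⟩⟩ := h
  have hchain : (u :: a ++ v :: (b ++ w :: (c ++ [u]))).IsChain G.Adj := by
    simpa using isChain_of_cycleEdges (x := u) (l := a ++ (v :: b) ++ (w :: c))
      fun e he => hl e ((cycleEdges_perm hrot).mem_iff.2 he)
  obtain ⟨hA, hAB, hchain⟩ := touches_of_isChain (b := b) hchain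
  obtain ⟨hB, hBC, hchain⟩ := touches_of_isChain (b := c) hchain
  obtain ⟨hC, hCA, -⟩ := touches_of_isChain (b := a) hchain
  have hnd' : (x :: y :: ((u :: a) ++ (v :: b) ++ (w :: c))).Nodup := by
    rw [List.nodup_cons, List.nodup_cons, List.mem_cons, ← hrot.mem_iff, ← hrot.mem_iff,
      ← hrot.nodup_iff]
    exact ⟨not_or.2 ⟨hxy.ne, hx⟩, hy, hnd⟩
  refine isMinorOf_of_nodup_flatten (Equiv.refl _) (b := ![[x], [y], u :: a, v :: b, w :: c])
    (by simpa using hnd') (by simp [Fin.forall_fin_succ, hA, hB, hC]) fun i j hij => ?_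
  wlog hlt : i < j generalizing i j
  · exact (this j i hij.symm ((not_lt.1 hlt).lt_of_ne hij.symm)).symm
  fin_cases i <;> fin_cases j <;> first | exact absurd hlt (by decide) | skip
  exacts [touches_singleton_cons hxy, touches_singleton_cons hux, touches_singleton_cons hvx,
    touches_singleton_cons hwx, touches_singleton_cons huy, touches_singleton_cons hvy,
    touches_singleton_cons hwy, hAB, hCA.symm, hBC]

end CyclicMinor

section Insertion

variable {V : Type*} {G H : SimpleGraph V} {l : List V} {x y p q : V}

/-- `H` with new vertices `x` and `y` inserted on the two sides of a chord `p q` of the cycle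
`p, a, q, b`: `x` is joined to `y` and to the arc `p, a, q`, and `y` to the arc `q, b, p`. -/
def insertAdjacentPair (H : SimpleGraph V) (x y p q : V) (a b : List V) : SimpleGraph V :=
  H ⊔ edge x p ⊔ edge y q ⊔ fan x (a ++ [q, y]) ⊔ fan y (b ++ [p])

lemma nodup_spokes {l' : List V} (hxy : x ≠ y) (hnd : l.Nodup) (hnd' : l'.Nodup)
    (hx : x ∉ l) (hy : y ∉ l) (hx' : x ∉ l') :
    (((l ++ [y]).map fun v => s(x, v)) ++ l'.map fun v => s(y, v)).Nodup := by
  have hinj (z : V) : Function.Injective fun v => s(z, v) := fun _ _ h => Sym2.congr_right.1 h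
  refine List.nodup_append'.2 ⟨List.Nodup.map (hinj x) ?_, hnd'.map (hinj y), ?_⟩
  · exact (List.nodup_append_comm).2 (List.nodup_cons.2 ⟨hy, hnd⟩)
  · simp only [List.disjoint_left, List.mem_map, not_exists, not_and]
    rintro _ ⟨v, -, rfl⟩ w hw heq
    rcases Sym2.eq_iff.1 heq with ⟨rfl, -⟩ | ⟨-, rfl⟩
    exacts [hxy rfl, hx' hw]

lemma cycleEdges_eq_append (a b : List V) : cycleEdges (p :: (a ++ q :: b)) =
    pathEdges (p :: (a ++ [q])) ++ pathEdges (q :: (b ++ [p])) := by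
  simpa [cycleEdges_cons] using pathEdges_append (p :: a) q (b ++ [p])

lemma pathEdges_append_pair (a : List V) :
    pathEdges (p :: (a ++ [q, y])) = pathEdges (p :: (a ++ [q])) ++ [s(q, y)] := by
  simpa using pathEdges_append (p :: a) q [y]

lemma le_insertAdjacentPair {a b : List V} (hxl : ∀ v, G.Adj x v → v = p ∨ v ∈ a ++ [q, y])
    (hyl : ∀ v, G.Adj y v → v = x ∨ v = q ∨ v ∈ b ++ [p]) :
    G ≤ insertAdjacentPair ((G.deleteIncidenceSet x).deleteIncidenceSet y) x y p q a b := by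
  set K := insertAdjacentPair ((G.deleteIncidenceSet x).deleteIncidenceSet y) x y p q a b
  have hx {v} (h : G.Adj x v) : K.Adj x v := by
    rcases hxl v h with rfl | hv
    · exact Or.inl (Or.inl (Or.inl (Or.inr ((adj_edge ..).2 ⟨rfl, h.ne⟩))))
    · exact Or.inl (Or.inr (fan_adj_of_mem hv h.ne))
  have hy {v} (h : G.Adj y v) : K.Adj y v := by
    rcases hyl v h with rfl | rfl | hv
    · exact (hx h.symm).symm
    · exact Or.inl (Or.inl (Or.inr ((adj_edge ..).2 ⟨rfl, h.ne⟩)))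
    · exact Or.inr (fan_adj_of_mem hv h.ne)
  intro u v huv
  by_cases hux : u = x
  · exact hux ▸ hx (hux ▸ huv)
  by_cases hvx : v = x
  · exact hvx ▸ (hx (hvx ▸ huv.symm)).symm
  by_cases huy : u = y
  · exact huy ▸ hy (huy ▸ huv)
  by_cases hvy : v = y
  · exact hvy ▸ (hy (hvy ▸ huv.symm)).symm
  refine Or.inl (Or.inl (Or.inl (Or.inl ?_)))
  rw [deleteIncidenceSet_adj, deleteIncidenceSet_adj]
  exact ⟨⟨huv, hux, hvx⟩, huy, hvy⟩

variable [DecidableEq V]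

-- The left-hand side is the multiplicity that two applications of `HasCycleCover.sup_fan` produce.
lemma count_insertAdjacentPair_le {a b : List V} (hxy : x ≠ y) (hx : x ∉ p :: (a ++ q :: b))
    (hy : y ∉ p :: (a ++ q :: b)) (hnd : (p :: (a ++ q :: b)).Nodup)
    (hsimple : (cycleEdges (p :: (a ++ q :: b))).Nodup)
    (hdisj : ∀ e ∈ cycleEdges (p :: (a ++ q :: b)), ¬(x ∈ e ∨ y ∈ e)) (e : Sym2 V) :
    [s(y, q)].count e + 2 * ((b ++ [p]).map fun v => s(y, v)).count e +
      (pathEdges (q :: (b ++ [p]))).count e + ([s(x, p)].count e +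
      2 * ((a ++ [q, y]).map fun v => s(x, v)).count e + (pathEdges (p :: (a ++ [q, y]))).count e +
      if x ∈ e ∨ y ∈ e then 0 else 2 - (cycleEdges (p :: (a ++ q :: b))).count e) ≤ 2 := by
  have hperm : (p :: (a ++ q :: b)).Perm (q :: (b ++ p :: a)) :=
    List.perm_append_comm (l₁ := p :: a)
  have hsub : (p :: (a ++ [q])).Sublist (p :: (a ++ q :: b)) := by simp
  have hsub' : (q :: (b ++ [p])).Sublist (q :: (b ++ p :: a)) := by simp
  have hspokes := nodup_spokes hxy (hnd.sublist hsub) ((hperm.nodup_iff.1 hnd).sublist hsub')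
    (fun h => hx (hsub.subset h)) (fun h => hy (hsub.subset h))
    fun h => hx (hperm.mem_iff.2 (hsub'.subset h))
  set spokes := (p :: (a ++ [q]) ++ [y]).map (fun v => s(x, v)) ++
    (q :: (b ++ [p])).map fun v => s(y, v) with hspokes_def
  have hoff (he : ¬(x ∈ e ∨ y ∈ e)) : spokes.count e = 0 := by
    refine List.count_eq_zero.2 fun h => he ?_
    rcases List.mem_append.1 h with h | h <;> obtain ⟨v, -, rfl⟩ := List.mem_map.1 h <;> simp
  have hon (he : x ∈ e ∨ y ∈ e) : (cycleEdges (p :: (a ++ q :: b))).count e = 0 :=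
    List.count_eq_zero.2 fun h => hdisj e h he
  have hspokes_le := List.nodup_iff_count_le_one.1 hspokes e
  have hcycle_le := List.nodup_iff_count_le_one.1 hsimple e
  simp only [hspokes_def, cycleEdges_eq_append, pathEdges_append_pair, List.map_append,
    List.map_cons, List.map_nil, List.count_append, List.count_cons, List.count_nil,
    Sym2.eq_swap (a := q)] at hoff hon hcycle_le hspokes_le ⊢
  by_cases he : x ∈ e ∨ y ∈ e
  · have := hon he
    rw [if_pos he]
    omega
  · have := hoff he
    rw [if_neg he]
    omega

variable [Fintype V]

lemma HasCycleCover.isMacLane_insertAdjacentPair {a b : List V}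
    (hH : HasCycleCover H fun e => 2 - (cycleEdges (p :: (a ++ q :: b))).count e)
    (hxH : ∀ v, ¬H.Adj x v) (hyH : ∀ v, ¬H.Adj y v) (hxy : x ≠ y) (hx : x ∉ p :: (a ++ q :: b))
    (hy : y ∉ p :: (a ++ q :: b)) (hnd : (p :: (a ++ q :: b)).Nodup)
    (hl : ∀ e ∈ cycleEdges (p :: (a ++ q :: b)), e ∈ H.edgeSet)
    (hsimple : (cycleEdges (p :: (a ++ q :: b))).Nodup) :
    IsMacLane (insertAdjacentPair H x y p q a b) := by
  have hdisj (e) (he : e ∈ H.edgeSet) : ¬(x ∈ e ∨ y ∈ e) := by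
    rintro (⟨v, rfl⟩ | ⟨v, rfl⟩)
    exacts [hxH v he, hyH v he]
  have hcount := count_insertAdjacentPair_le hxy hx hy hnd hsimple fun e he => hdisj e (hl e he)
  simp only [List.mem_cons, List.mem_append, not_or] at hx hy
  obtain ⟨hxp, hxa, hxq, hxb⟩ := hx
  obtain ⟨hyp, hya, hyq, hyb⟩ := hy
  rw [cycleEdges_eq_append, List.forall_mem_append] at hl
  have hsharp : HasCycleCover H fun e => if x ∈ e ∨ y ∈ e then 0 else
      2 - (cycleEdges (p :: (a ++ q :: b))).count e :=
    hH.mono fun e he => by rw [if_neg (hdisj e he)]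
  have hyH' (v) : ¬(H ⊔ edge x p).Adj y v := by simp [hyH v, edge_adj, hxy.symm, hyp]
  have hbase : HasCycleCover (H ⊔ edge x p ⊔ edge y q) _ :=
    (hsharp.congr (cycleSpace_sup_edge_of_isolated hxH p)).congr
      (cycleSpace_sup_edge_of_isolated hyH' q)
  have hpath : ∀ e ∈ pathEdges (p :: (a ++ [q, y])), e ∈ (H ⊔ edge x p ⊔ edge y q).edgeSet := by
    rw [pathEdges_append_pair, List.forall_mem_append]
    exact ⟨fun e he => edgeSet_mono (le_sup_left.trans le_sup_left) (hl.1 e he),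
      by simp [hyq, Ne.symm hyq]⟩
  have hxfan := hbase.sup_fan (x := x) (y := p) (l := a ++ [q, y]) (by simp [edge_adj, hxp])
    (by simp [hxa, hxq, hxy]) hpath
  have hyfan := hxfan.sup_fan (x := y) (y := q) (l := b ++ [p]) (by simp [edge_adj, hyq])
    (by simp [hyb, hyp]) fun e he =>
      edgeSet_mono (le_sup_left.trans (le_sup_left.trans le_sup_left)) (hl.2 e he)
  exact hyfan.mono fun e _ => hcount e

lemma CyclicallySeparated.isMacLane
    (hsep : CyclicallySeparated l (G.neighborSet x) (G.neighborSet y))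
    (hl : HasCycleCover ((G.deleteIncidenceSet x).deleteIncidenceSet y)
      fun e => 2 - (cycleEdges l).count e)
    (hedge : ∀ e ∈ cycleEdges l, e ∈ ((G.deleteIncidenceSet x).deleteIncidenceSet y).edgeSet)
    (hsimple : (cycleEdges l).Nodup) (hnd : l.Nodup) (hxy : x ≠ y) (hx : x ∉ l) (hy : y ∉ l)
    (hxl : ∀ v, G.Adj x v → v = y ∨ v ∈ l) (hyl : ∀ v, G.Adj y v → v = x ∨ v ∈ l) :
    IsMacLane G := by
  obtain ⟨p, q, a, b, hrot, ha, hb⟩ := hsep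
  have hcyc := cycleEdges_perm hrot
  rw [hrot.mem_iff] at hx hy
  rw [hrot.nodup_iff] at hnd
  rw [hcyc.nodup_iff] at hsimple
  simp only [hcyc.count_eq] at hl
  simp only [hcyc.mem_iff] at hedge
  simp only [hrot.mem_iff] at hxl hyl
  refine (hl.isMacLane_insertAdjacentPair (fun v h => ?_) (fun v h => ?_) hxy hx hy hnd hedge
    hsimple).anti (le_insertAdjacentPair (fun v h => ?_) fun v h => ?_)
  · simp [deleteIncidenceSet_adj] at h
  · simp [deleteIncidenceSet_adj] at h
  · have := hxl v h
    have : v ∉ b := fun hv => hb v hv h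
    simp only [List.mem_cons, List.mem_append] at *
    tauto
  · have := hyl v h
    have : v ∉ a := fun hv => ha v hv h
    simp only [List.mem_cons, List.mem_append] at *
    tauto

end Insertion

/-! ### Planar graphs satisfy MacLane's criterion -/

section ContractEdge

variable {V : Type*} {G : SimpleGraph V} {x y u v : V} {s : Finset V}

/-- The graph obtained by contracting `y` into `x`. -/
def contractEdge (G : SimpleGraph V) (x y : V) : SimpleGraph V where
  Adj u v := u ≠ v ∧ u ≠ y ∧ v ≠ y ∧ (G.Adj u v ∨ (u = x ∧ G.Adj y v) ∨ (v = x ∧ G.Adj u y))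
  symm := ⟨fun _ _ ⟨huv, huy, hvy, h⟩ => ⟨huv.symm, hvy, huy,
    h.imp Adj.symm fun h => h.symm.imp (And.imp_right Adj.symm) (And.imp_right Adj.symm)⟩⟩
  loopless := ⟨fun _ h => h.1 rfl⟩

lemma contractEdge_isContraction (hxy : G.Adj x y) :
    IsContraction (contractEdge G x y) G x {y} where
  connected := induce_pair_connected_of_adj hxy
  not_adj := by
    rintro u v rfl h
    exact h.2.1 rfl
  adj_or u v h := by simpa using h.2.2.2

lemma support_contractEdge_subset [DecidableEq V] (hs : G.support ⊆ s) (hxy : G.Adj x y) :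
    (contractEdge G x y).support ⊆ s.erase y := by
  rintro u ⟨v, -, huy, -, h⟩
  refine mem_coe.2 (mem_erase.2 ⟨huy, ?_⟩)
  rcases h with h | ⟨rfl, -⟩ | ⟨-, h⟩
  exacts [hs ⟨v, h⟩, hs ⟨y, hxy⟩, hs ⟨y, h⟩]

lemma contractEdge_deleteIncidenceSet :
    (contractEdge G x y).deleteIncidenceSet x =
      (G.deleteIncidenceSet x).deleteIncidenceSet y := by
  ext u v
  rw [deleteIncidenceSet_adj, deleteIncidenceSet_adj, deleteIncidenceSet_adj]
  constructor
  · rintro ⟨⟨-, huy, hvy, h⟩, hux, hvx⟩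
    exact ⟨⟨by tauto, hux, hvx⟩, huy, hvy⟩
  · rintro ⟨⟨h, hux, hvx⟩, huy, hvy⟩
    exact ⟨⟨h.ne, huy, hvy, Or.inl h⟩, hux, hvx⟩

lemma contractEdge_adj_left (hxy : G.Adj x y) :
    (contractEdge G x y).Adj x v ↔ v ≠ x ∧ v ≠ y ∧ (G.Adj x v ∨ G.Adj y v) := by
  have hne := hxy.ne
  simp only [contractEdge]
  tauto

end ContractEdge

section ThreeConnected

variable {V : Type*} {G : SimpleGraph V} {x y : V} {s : Finset V}

lemma exists_adj_adj_ne [Finite V] (h2 : ∀ X D, #X ≤ 2 → ¬IsCut G s X D) (h4 : 4 ≤ #s)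
    (hx : x ∈ s) (y : V) :
    ∃ p ∈ G.neighborSet x, ∃ q ∈ G.neighborSet x, p ≠ y ∧ q ≠ y ∧ p ≠ q := by
  classical
  have := Fintype.ofFinite V
  have hdeg : 3 ≤ #(G.neighborFinset x) := by
    by_contra! hle
    obtain ⟨v, hv, hvn⟩ := exists_mem_notMem_of_card_lt_card
      (show #(insert x (G.neighborFinset x)) < #s by grw [card_insert_le]; omega)
    simp only [mem_insert, not_or] at hvn
    refine h2 _ {x} (Nat.lt_succ_iff.1 hle) ⟨singleton_nonempty x, by simpa using hx, by simp,
      ⟨v, hv, hvn.2, by simpa using hvn.1⟩, fun u v hu huv => Or.inr ?_⟩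
    simpa only [mem_singleton.1 hu, mem_neighborFinset] using huv
  have hdeg' := pred_card_le_card_erase (s := G.neighborFinset x) (a := y)
  obtain ⟨p, hp, q, hq, hpq⟩ := one_lt_card.1
    (show 1 < #((G.neighborFinset x).erase y) by omega)
  simp only [mem_erase, mem_neighborFinset] at hp hq
  exact ⟨p, hp.2, q, hq.2, hp.1, hq.1, hpq⟩

variable [DecidableEq V]

lemma isTwoConnectedOn_deleteIncidenceSet (hs : G.support ⊆ s) (h5 : 5 ≤ #s)
    (h2 : ∀ X D, #X ≤ 2 → ¬IsCut G s X D) (h3 : ∀ z D, ¬IsCut G s {x, y, z} D) :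
    IsTwoConnectedOn ((G.deleteIncidenceSet x).deleteIncidenceSet y) (s \ {x, y}) where
  support_subset := by
    rintro u ⟨v, h⟩
    replace h : ((G.deleteIncidenceSet x).deleteIncidenceSet y).Adj u v := h
    rw [deleteIncidenceSet_adj, deleteIncidenceSet_adj] at h
    simpa [h.1.2.1, h.2.1] using hs ⟨v, h.1.1⟩
  three_le_card := by
    have := le_card_sdiff {x, y} s
    have : #{x, y} ≤ 2 := card_le_two
    omega
  not_isCut X D hX hD := by
    have hcut : IsCut G s ({x, y} ∪ X) D := by
      refine ⟨hD.nonempty, hD.subset.trans sdiff_subset, disjoint_union_right.2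
        ⟨disjoint_sdiff_self_left.mono_left hD.subset, hD.disjoint⟩, ?_, fun u v hu huv => ?_⟩
      · obtain ⟨v, hv, hvX, hvD⟩ := hD.exists_notMem
        rw [mem_sdiff] at hv
        exact ⟨v, hv.1, by simp only [mem_union, hv.2, hvX, or_self, not_false_eq_true], hvD⟩
      · have hu' := (mem_sdiff.1 (hD.subset hu)).2
        by_cases hv : v ∈ ({x, y} : Finset V)
        · exact Or.inr (mem_union_left _ hv)
        · simp only [mem_insert, mem_singleton, not_or] at hu' hv
          refine (hD.closed hu ?_).imp_right (mem_union_right _)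
          rw [deleteIncidenceSet_adj, deleteIncidenceSet_adj]
          exact ⟨⟨huv, hu'.1, hv.1⟩, hu'.2, hv.2⟩
    rcases Nat.le_one_iff_eq_zero_or_eq_one.1 hX with hX | hX
    · exact h2 _ D (by simpa [card_eq_zero.1 hX] using card_le_two) hcut
    · obtain ⟨z, rfl⟩ := card_eq_one.1 hX
      exact h3 z D (by simpa only [insert_union, singleton_union] using hcut)

variable [Fintype V]

lemma IsMacLane.exists_list_of_contractEdge (hs : G.support ⊆ s) (h5 : 5 ≤ #s)
    (h2 : ∀ X D, #X ≤ 2 → ¬IsCut G s X D) (hxy : G.Adj x y) (h3 : ∀ z D, ¬IsCut G s {x, y, z} D)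
    (hcontr : IsMacLane (contractEdge G x y)) :
    ∃ l : List V, l.Nodup ∧ (cycleEdges l).Nodup ∧ x ∉ l ∧ y ∉ l ∧
      (∀ v, v ≠ x → v ≠ y → G.Adj x v ∨ G.Adj y v → v ∈ l) ∧
      (∀ e ∈ cycleEdges l, e ∈ ((G.deleteIncidenceSet x).deleteIncidenceSet y).edgeSet) ∧
      HasCycleCover ((G.deleteIncidenceSet x).deleteIncidenceSet y)
        fun e => 2 - (cycleEdges l).count e := by
  obtain ⟨p, hp, p', hp', hpy, hpy', hpp'⟩ := exists_adj_adj_ne h2 (by omega) (hs ⟨y, hxy⟩) y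
  have hadj {r} (hrx : r ≠ x) (hry : r ≠ y) (h : G.Adj x r ∨ G.Adj y r) :
      (contractEdge G x y).Adj x r :=
    (contractEdge_adj_left hxy).2 ⟨hrx, hry, h⟩
  have hsub (r) (hr : (contractEdge G x y).Adj x r) : r ∈ s \ {x, y} := by
    have := support_contractEdge_subset hs hxy ⟨x, hr.symm⟩
    simp_all [hr.ne']
  have hH := isTwoConnectedOn_deleteIncidenceSet hs h5 h2 h3
  rw [← contractEdge_deleteIncidenceSet] at hH ⊢
  obtain ⟨v, C, hC, hCs, hcover⟩ := hcontr.exists_isCycle_deleteIncidenceSet hH hsub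
    (hadj hp.ne' hpy (Or.inl hp)) (hadj hp'.ne' hpy' (Or.inl hp')) hpp'
  obtain ⟨l, hnd, hlC, hmem⟩ := exists_cycleEdges_eq hC
  have hnot (u) (hu : ¬∃ w, ((contractEdge G x y).deleteIncidenceSet x).Adj u w) : u ∉ l := by
    intro hul
    obtain ⟨e, he, hue⟩ :=
      (Walk.mem_support_iff_exists_mem_edges_of_not_nil hC.not_nil).1 ((hmem u).1 hul)
    obtain ⟨w, rfl⟩ := Sym2.mem_iff_exists.1 hue
    exact hu ⟨w, C.edges_subset_edgeSet he⟩
  exact ⟨l, hnd, hlC ▸ hC.isTrail.edges_nodup, hnot x (by simp [deleteIncidenceSet_adj]),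
    hnot y (by simp [contractEdge_deleteIncidenceSet, deleteIncidenceSet_adj]),
    fun r hrx hry hr => (hmem r).2 (hCs r (hadj hrx hry hr)),
    fun e he => C.edges_subset_edgeSet (hlC ▸ he), by rwa [hlC]⟩

lemma IsMacLane.of_contractEdge (hs : G.support ⊆ s) (h5 : 5 ≤ #s)
    (h2 : ∀ X D, #X ≤ 2 → ¬IsCut G s X D) (hxy : G.Adj x y) (h3 : ∀ z D, ¬IsCut G s {x, y, z} D)
    (hG : G.IsPlanar) (hcontr : IsMacLane (contractEdge G x y)) : IsMacLane G := by
  obtain ⟨l, hnd, hsimple, hx, hy, hl, hedge, hcover⟩ :=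
    hcontr.exists_list_of_contractEdge hs h5 h2 hxy h3
  have hedgeG : ∀ e ∈ cycleEdges l, e ∈ G.edgeSet := fun e he =>
    edgeSet_mono ((deleteIncidenceSet_le _ y).trans (deleteIncidenceSet_le G x)) (hedge e he)
  have hxl (v) (hv : G.Adj x v) (hvy : v ≠ y) : v ∈ l := hl v hv.ne' hvy (Or.inl hv)
  have hyl (v) (hv : G.Adj y v) (hvx : v ≠ x) : v ∈ l := hl v hvx hv.ne' (Or.inr hv)
  obtain ⟨p, hp, p', hp', hpy, hpy', hpp'⟩ := exists_adj_adj_ne h2 (by omega) (hs ⟨y, hxy⟩) y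
  obtain ⟨q, hq, q', hq', hqx, hqx', hqq'⟩ :=
    exists_adj_adj_ne h2 (by omega) (hs ⟨x, hxy.symm⟩) x
  rcases cyclicallySeparated_or_interlaced_or_tripled
      ⟨p, hp, p', hp', hxl p hp hpy, hxl p' hp' hpy', hpp'⟩
      ⟨q, hq, q', hq', hyl q hq hqx, hyl q' hq' hqx', hqq'⟩ with hsep | hinter | htri
  · exact hsep.isMacLane hcover hedge hsimple hnd hxy.ne hx hy
      (fun v hv => or_iff_not_imp_left.2 (hxl v hv)) fun v hv => or_iff_not_imp_left.2 (hyl v hv)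
  · exact (hG.2 (hinter.completeBipartiteGraph_isMinorOf hxy hx hy hnd hedgeG)).elim
  · exact (hG.1 (htri.completeGraph_isMinorOf hxy hx hy hnd hedgeG)).elim

lemma isMacLane_of_support_subset (s : Finset V) (G : SimpleGraph V) (hs : G.support ⊆ s)
    (hG : G.IsPlanar) : IsMacLane G := by
  induction s using Finset.strongInduction generalizing G with | H s ih =>
  by_cases! h2 : ∃ X D, #X ≤ 2 ∧ IsCut G s X D
  · obtain ⟨X, D, hX, hD⟩ := h2
    exact .of_isCut hs hD hX hG fun t ht H hHt hH => ih t ht H hHt hH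
  by_cases h5 : 5 ≤ #s
  · obtain ⟨x, y, hxy, h3⟩ := exists_adj_forall_not_isCut hs (by omega) h2
    exact .of_contractEdge hs h5 h2 hxy h3 hG <|
      ih _ (erase_ssubset (hs ⟨x, hxy.symm⟩)) _ (support_contractEdge_subset hs hxy)
        ((contractEdge_isContraction hxy).isPlanar hG)
  · exact .of_card_le_four hs (by omega)

theorem isMacLane_iff_isPlanar : IsMacLane G ↔ G.IsPlanar :=
  ⟨IsMacLane.isPlanar, isMacLane_of_support_subset univ G (by simp)⟩

end ThreeConnected

section LowerBound

variable {V : Type*} [Fintype V] {G : SimpleGraph V} {r m g : ℕ}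

lemma sum_degN (G : SimpleGraph V) : ∑ v, G.degN v = 2 * G.edgeSet.ncard := by
  classical
  rw [← coe_edgeFinset, Set.ncard_coe_finset, ← sum_degrees_eq_twice_card_edges]
  simp only [degN, ← coe_neighborFinset, Set.ncard_coe_finset, card_neighborFinset_eq_degree]

lemma mul_card_add_le_two_mul_ncard_edgeSet (hG : IsBigirthGraph G r m g) (hrm : r ≤ m) :
    r * Fintype.card V + m ≤ 2 * G.edgeSet.ncard + r := by
  classical
  obtain ⟨-, hdeg, -, w, hw⟩ := hG
  have hr (v) : r ≤ G.degN v := (hdeg v).elim ge_of_eq fun h => h ▸ hrm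
  have herase : #(univ.erase w) • r ≤ ∑ v ∈ univ.erase w, G.degN v :=
    card_nsmul_le_sum _ _ _ fun v _ => hr v
  rw [← sum_degN, ← add_sum_erase _ _ (mem_univ w), hw, ← card_univ,
    ← card_erase_add_one (mem_univ w)]
  rw [smul_eq_mul, mul_comm] at herase
  linarith

-- Euler's formula, double counting of edge-face incidences and of degrees.
lemma mul_card_le_of_isPlanar (hG : IsBigirthGraph G r m g) (hplanar : G.IsPlanar)
    (hr : 2 ≤ r) (hrm : r ≤ m) (hg : 2 ≤ g) :
    g * (r * Fintype.card V + m + 4) + 2 * r ≤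
      2 * (r * Fintype.card V + m) + g * (2 * Fintype.card V + r) := by
  classical
  have hedges := mul_card_add_le_two_mul_ncard_edgeSet hG hrm
  have hcard : 2 * Fintype.card V ≤ r * Fintype.card V := Nat.mul_le_mul_right _ hr
  have : Nonempty V := ⟨hG.2.2.1.choose⟩
  have hfaces : g * (G.edgeSet.ncard + 2) ≤ 2 * G.edgeSet.ncard + g * Fintype.card V :=
    (isMacLane_iff_isPlanar.2 hplanar).girth_mul_le (fun v C hC => hG.1 ▸ girth_le_length hC)
      (by omega)
  obtain ⟨k, rfl⟩ := Nat.exists_eq_add_of_le hg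
  nlinarith [Nat.mul_le_mul_left k hedges]

end LowerBound

/-! ### A cyclic pentagonal graph with two hubs -/

section FaceCount

open Module

lemma card_le_finrank_span_add_one {K M F : Type*} [Field K] [AddCommGroup M] [Module K M]
    [Fintype F] {c : F → M}
    (hker : ∀ φ : F → K, ∑ f, φ f • c f = 0 → ∀ f f', φ f = φ f') :
    Fintype.card F ≤ finrank K (Submodule.span K (Set.range c)) + 1 := by
  have hle : LinearMap.ker (Fintype.linearCombination K c) ≤
      Submodule.span K {fun _ => 1} := fun φ hφ => by
    rcases isEmpty_or_nonempty F with hF | ⟨⟨f⟩⟩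
    · exact Subsingleton.elim φ 0 ▸ zero_mem _
    · refine Submodule.mem_span_singleton.2 ⟨φ f, funext fun f' => ?_⟩
      simpa using hker φ (by simpa [Fintype.linearCombination_apply] using hφ) f f'
  have hker1 := (Submodule.finrank_mono hle).trans (finrank_span_le_card _)
  have hrank := (Fintype.linearCombination K c).finrank_range_add_finrank_ker
  rw [Fintype.range_linearCombination, finrank_fintype_fun_eq_card] at hrank
  simp only [Set.toFinset_singleton, card_singleton] at hker1
  omega

variable {V : Type*} [Fintype V] [DecidableEq V] {G : SimpleGraph V}

lemma finrank_cycleSpace_add_card_le (hG : G.Connected) :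
    finrank (ZMod 2) (cycleSpace G) + Fintype.card V ≤ G.edgeSet.ncard + 1 := by
  have := hG.nonempty
  have hle : LinearMap.ker (augmentation V) ≤ (edgeSpace G).map (boundary V) := fun β hβ => by
    obtain ⟨z, hz, rfl⟩ := exists_boundary_eq (A := Set.univ) (G := G) (β := β)
      (fun u _ v _ => hG.preconnected u v) (by simp) (by simpa [augmentation] using hβ)
    exact ⟨z, hz, rfl⟩
  have h1 := Submodule.finrank_mono hle
  have h2 := finrank_ker_augmentation (V := V)
  have h3 := finrank_cycleSpace_add G
  omega

variable {F : Type} [Fintype F] {c : F → Sym2 V → ZMod 2}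

-- The faces span a space of dimension `F - 1 ≥ E - V + 1`, the dimension of the cycle space.
lemma IsMacLane.of_card_add_two_le (hG : G.Connected) (hc : ∀ f, c f ∈ cycleSpace G)
    (hcov : ∀ e, coverage c e ≤ 2)
    (hker : ∀ φ : F → ZMod 2, ∑ f, φ f • c f = 0 → ∀ f f', φ f = φ f')
    (heuler : G.edgeSet.ncard + 2 ≤ Fintype.card V + Fintype.card F) : IsMacLane G := by
  have hV := finrank_cycleSpace_add_card_le hG
  have hF := card_le_finrank_span_add_one hker
  exact ⟨F, inferInstance, c, Submodule.eq_of_le_of_finrank_le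
    (Submodule.span_le.2 (Set.range_subset_iff.2 hc)) (by omega), hcov⟩

lemma IsMacLane.of_faces {E : Type*} (hG : G.Connected)
    (W : F → Σ v, G.Walk v v) {edge : E → Sym2 V} (hedge : G.edgeSet ⊆ Set.range edge)
    [DecidableEq F] {left right : E → F}
    (hW : ∀ x f, walkChain (W f).2 (edge x) =
      Pi.single (M := fun _ => ZMod 2) (left x) 1 f +
        Pi.single (M := fun _ => ZMod 2) (right x) 1 f)
    (hdual : ∀ φ : F → ZMod 2, (∀ x, φ (left x) = φ (right x)) → ∀ f f', φ f = φ f')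
    (heuler : G.edgeSet.ncard + 2 ≤ Fintype.card V + Fintype.card F) : IsMacLane G := by
  refine .of_card_add_two_le (c := fun f => walkChain (W f).2) hG
    (fun f => walkChain_mem_cycleSpace _) (fun e => ?_) (fun φ hφ => hdual φ fun x => ?_) heuler
  · by_cases he : e ∈ G.edgeSet
    · obtain ⟨x, rfl⟩ := hedge he
      refine (card_le_card fun f hf => ?_).trans (card_le_two (a := left x) (b := right x))
      simp only [mem_filter_univ, hW] at hf
      by_contra hne
      simp_all [Pi.single_apply]
    · rw [coverage, card_eq_zero.2]
      · exact Nat.zero_le _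
      · exact filter_eq_empty_iff.2 fun f _ => not_not.2 (walkChain_mem_edgeSpace _ e he)
  · have := congrFun hφ (edge x)
    simp only [Finset.sum_apply, Pi.smul_apply, hW, smul_eq_mul, mul_add,
      sum_add_distrib, Pi.zero_apply] at this
    simpa [Pi.single_apply, CharTwo.add_eq_zero] using this

end FaceCount

section Girth

variable {V : Type*} {G : SimpleGraph V} {u : V}

lemma five_le_length_of_isCycle (h3 : ∀ ⦃x y z⦄, G.Adj x y → G.Adj y z → ¬G.Adj z x)
    (h4 : ∀ ⦃x y z w⦄, G.Adj x y → G.Adj y z → G.Adj z w → G.Adj w x → x = z ∨ y = w)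
    {C : G.Walk u u} (hC : C.IsCycle) : 5 ≤ C.length := by
  have hlen := hC.three_le_length
  have hnd := hC.support_nodup
  match C with
  | .cons hxy (.cons hyz (.cons hzx .nil)) => exact (h3 hxy hyz hzx).elim
  | .cons hxy (.cons hyz (.cons hzw (.cons hwx .nil))) =>
    rcases h4 hxy hyz hzw hwx with rfl | rfl <;> simp at hnd
  | .cons _ (.cons _ (.cons _ (.cons _ (.cons _ _)))) => simp only [Walk.length_cons]; omega

end Girth

section Cage

variable {m : ℕ}

/-- The vertices of `cage m`: six for each residue modulo `m`, and two hubs. -/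
abbrev CageVertex (m : ℕ) : Type := (ZMod m × Fin 6) ⊕ Fin 2

/-- The edges of `cage m` between non-hub vertices, as a voltage assignment: `voltage s t = some d`
means that `(i, s)` is adjacent to `(i + d, t)` for all `i`. The vertices of types `0, 1, 2` form
the outer cycle of length `3 * m` and those of types `3, 4, 5` the inner one. -/
def voltage : Fin 6 → Fin 6 → Option ℤ
  | 0, 1 | 1, 0 | 1, 2 | 2, 1 | 3, 4 | 4, 3 | 4, 5 | 5, 4 | 2, 4 | 4, 2 => some 0
  | 2, 0 | 5, 3 | 5, 1 => some 1
  | 0, 2 | 3, 5 | 1, 5 => some (-1)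
  | _, _ => none

/-- The type of the vertices of `cage m` that are adjacent to a hub. -/
def spoke : Fin 2 → Fin 6 := ![0, 3]

lemma voltage_symm : ∀ s t, voltage t s = (voltage s t).map Neg.neg := by decide

lemma voltage_self : ∀ s, voltage s s = none := by decide

/-- A planar graph of girth five with `6 * m` vertices of degree three and two of degree `m`. -/
def cage (m : ℕ) : SimpleGraph (CageVertex m) where
  Adj
    | .inl (i, s), .inl (j, t) => ∃ d ∈ voltage s t, j = i + (d : ZMod m)
    | .inl (_, s), .inr k => s = spoke k
    | .inr k, .inl (_, s) => s = spoke k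
    | .inr _, .inr _ => False
  symm := ⟨by
    rintro (⟨i, s⟩ | k) (⟨j, t⟩ | k') h
    · obtain ⟨d, hd, rfl⟩ := h
      exact ⟨-d, by rw [voltage_symm, hd]; rfl, by simp⟩
    all_goals exact h⟩
  loopless := ⟨by
    rintro (⟨i, s⟩ | k) h
    · obtain ⟨d, hd, -⟩ := h
      simp [voltage_self] at hd
    · exact h⟩

variable {i j : ZMod m} {s t : Fin 6} {k l : Fin 2}

@[simp] lemma cage_adj_inl_inl :
    (cage m).Adj (.inl (i, s)) (.inl (j, t)) ↔ ∃ d ∈ voltage s t, j = i + (d : ZMod m) := Iff.rfl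

@[simp] lemma cage_adj_inl_inr : (cage m).Adj (.inl (i, s)) (.inr k) ↔ s = spoke k := Iff.rfl

@[simp] lemma cage_adj_inr_inl : (cage m).Adj (.inr k) (.inl (i, s)) ↔ s = spoke k := Iff.rfl

@[simp] lemma not_cage_adj_inr_inr : ¬(cage m).Adj (.inr k) (.inr l) := id

lemma degN_cage_inl (i : ZMod m) (t : Fin 6) : (cage m).degN (.inl (i, t)) = 3 := by
  let f : Fin 6 ⊕ Fin 2 → CageVertex m :=
    Sum.map (fun s => (i + ((voltage t s).getD 0 : ZMod m), s)) id
  let N (t : Fin 6) : Finset (Fin 6 ⊕ Fin 2) :=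
    {o | o.elim (fun s => (voltage t s).isSome) fun k => t = spoke k}
  have hf : f.Injective := by
    rintro (s | k) (s' | k') h <;> simp_all [f]
  have hN : (cage m).neighborSet (.inl (i, t)) = f '' N t := by
    ext (⟨j, s⟩ | k)
    · rcases h : voltage t s with _ | d
      · simp [N, f, h]
      · simp [N, f, h, eq_comm (a := j)]
    · simp [N, f]
  have hcard : ∀ t, #(N t) = 3 := by decide
  rw [degN, hN, Set.ncard_image_of_injective _ hf, Set.ncard_coe_finset, hcard]

lemma degN_cage_inr (k : Fin 2) : (cage m).degN (.inr k) = m := by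
  have hN : (cage m).neighborSet (.inr k) = Set.range fun i => .inl (i, spoke k) := by
    ext (⟨j, s⟩ | l) <;> simp [eq_comm]
  rw [degN, hN, Set.ncard_range_of_injective fun i j h => by simpa using h, Nat.card_zmod]

lemma intCast_eq_zero_of_abs_lt {d : ℤ} (hd : |d| < m) (h : (d : ZMod m) = 0) : d = 0 :=
  Int.eq_zero_of_abs_lt_dvd ((ZMod.intCast_zmod_eq_zero_iff_dvd d m).1 h) hd

lemma voltage_triangle : ∀ s t p, ∀ a ∈ voltage s t, ∀ b ∈ voltage t p, ∀ c ∈ voltage p s,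
    |a + b + c| < 4 ∧ a + b + c ≠ 0 := by decide

lemma voltage_quadrangle : ∀ s t p, ∀ a ∈ voltage s t, ∀ b ∈ voltage t p,
    ∀ q, ∀ c ∈ voltage p q, ∀ d ∈ voltage q s, |a + b + c + d| < 4 ∧
      (a + b + c + d = 0 → (s = p ∧ a + b = 0) ∨ (t = q ∧ b + c = 0)) := by decide

lemma cage_not_adj_of_adj_hub {y z : CageVertex m} (hy : (cage m).Adj (.inr k) y)
    (hz : (cage m).Adj (.inr k) z) : ¬(cage m).Adj y z := by
  rcases y with ⟨i, s⟩ | l <;> rcases z with ⟨j, t⟩ | l' <;> simp_all [voltage_self]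

lemma cage_eq_of_adj_hub {y z w : CageVertex m} (hy : (cage m).Adj (.inr k) y)
    (hyz : (cage m).Adj y z) (hzw : (cage m).Adj z w) (hw : (cage m).Adj w (.inr k)) :
    .inr k = z ∨ y = w := by
  have hspoke : spoke.Injective := by decide
  rcases y with ⟨i, s⟩ | _
  · rcases w with ⟨j, t⟩ | _
    · obtain rfl : s = spoke k := hy
      obtain rfl : t = spoke k := hw
      rcases z with ⟨n, p⟩ | l
      · obtain ⟨d, hd, rfl⟩ := hyz.symm
        obtain ⟨d', hd', rfl⟩ := hzw
        rw [Option.mem_unique hd hd']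
        exact Or.inr rfl
      · exact Or.inl (congrArg _ (hspoke hyz))
    · exact hw.elim
  · exact hy.elim

lemma cage_not_adj_of_adj_adj (hm : 4 ≤ m) {x y z : CageVertex m} (hxy : (cage m).Adj x y)
    (hyz : (cage m).Adj y z) : ¬(cage m).Adj z x := by
  intro hzx
  rcases x with ⟨i, s⟩ | k
  · rcases y with ⟨j, t⟩ | k
    · rcases z with ⟨n, p⟩ | k
      · obtain ⟨a, ha, rfl⟩ := hxy
        obtain ⟨b, hb, rfl⟩ := hyz
        obtain ⟨c, hc, h⟩ := hzx
        obtain ⟨hlt, hne⟩ := voltage_triangle s t p a ha b hb c hc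
        refine hne (intCast_eq_zero_of_abs_lt (m := m) (by omega) ?_)
        push_cast
        linear_combination -h
      · exact cage_not_adj_of_adj_hub hzx hyz.symm hxy
    · exact cage_not_adj_of_adj_hub hyz hxy.symm hzx
  · exact cage_not_adj_of_adj_hub hxy hzx.symm hyz

lemma cage_eq_or_eq_of_adj (hm : 4 ≤ m) {x y z w : CageVertex m} (hxy : (cage m).Adj x y)
    (hyz : (cage m).Adj y z) (hzw : (cage m).Adj z w) (hwx : (cage m).Adj w x) :
    x = z ∨ y = w := by
  rcases x with ⟨i, s⟩ | k
  · rcases y with ⟨j, t⟩ | k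
    · rcases z with ⟨n, p⟩ | k
      · rcases w with ⟨o, q⟩ | k
        · obtain ⟨a, ha, rfl⟩ := hxy
          obtain ⟨b, hb, rfl⟩ := hyz
          obtain ⟨c, hc, rfl⟩ := hzw
          obtain ⟨d, hd, h⟩ := hwx
          obtain ⟨hlt, hbacktrack⟩ := voltage_quadrangle s t p a ha b hb q c hc d hd
          have hsum : a + b + c + d = 0 := by
            refine intCast_eq_zero_of_abs_lt (m := m) (by omega) ?_
            push_cast
            linear_combination -h
          refine (hbacktrack hsum).imp ?_ ?_
          · rintro ⟨rfl, hab⟩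
            rw [add_assoc, ← Int.cast_add, hab, Int.cast_zero, add_zero]
          · rintro ⟨rfl, hbc⟩
            rw [add_assoc (i + _), ← Int.cast_add, hbc, Int.cast_zero, add_zero]
        · exact (cage_eq_of_adj_hub hwx hxy hyz hzw).symm.imp_right Eq.symm
      · exact (cage_eq_of_adj_hub hzw hwx hxy hyz).imp Eq.symm Eq.symm
    · exact (cage_eq_of_adj_hub hyz hzw hwx hxy).symm.imp_left Eq.symm
  · exact cage_eq_of_adj_hub hxy hyz hzw hwx

end Cage

section CageFaces

variable {m : ℕ}

/-- An enumeration of the edges of `cage m`. -/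
def cageEdge : ZMod m × Fin 10 → Sym2 (CageVertex m)
  | (i, 0) => s(.inr 0, .inl (i, 0))
  | (i, 1) => s(.inl (i, 0), .inl (i, 1))
  | (i, 2) => s(.inl (i, 1), .inl (i, 2))
  | (i, 3) => s(.inl (i, 2), .inl (i + 1, 0))
  | (i, 4) => s(.inr 1, .inl (i, 3))
  | (i, 5) => s(.inl (i, 3), .inl (i, 4))
  | (i, 6) => s(.inl (i, 4), .inl (i, 5))
  | (i, 7) => s(.inl (i, 5), .inl (i + 1, 3))
  | (i, 8) => s(.inl (i, 2), .inl (i, 4))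
  | (i, 9) => s(.inl (i, 5), .inl (i + 1, 1))

/-- The boundaries of the pentagonal faces of a plane drawing of `cage m`. -/
def cageFace : ZMod m × Fin 4 → Σ v, (cage m).Walk v v
  | (i, 0) => ⟨.inr 0,
      .cons' _ (.inl (i, 0)) _ (by simp [spoke]) <|
      .cons' _ (.inl (i, 1)) _ (by simp [voltage]) <|
      .cons' _ (.inl (i, 2)) _ (by simp [voltage]) <|
      .cons' _ (.inl (i + 1, 0)) _ (by simp [voltage]) <|
      .cons' _ _ _ (by simp [spoke]) .nil⟩
  | (i, 1) => ⟨.inl (i + 1, 1),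
      .cons' _ (.inl (i + 1, 2)) _ (by simp [voltage]) <|
      .cons' _ (.inl (i + 1, 4)) _ (by simp [voltage]) <|
      .cons' _ (.inl (i + 1, 3)) _ (by simp [voltage]) <|
      .cons' _ (.inl (i, 5)) _ (by simp [voltage]) <|
      .cons' _ _ _ (by simp [voltage]) .nil⟩
  | (i, 2) => ⟨.inl (i, 2),
      .cons' _ (.inl (i + 1, 0)) _ (by simp [voltage]) <|
      .cons' _ (.inl (i + 1, 1)) _ (by simp [voltage]) <|
      .cons' _ (.inl (i, 5)) _ (by simp [voltage]) <|
      .cons' _ (.inl (i, 4)) _ (by simp [voltage]) <|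
      .cons' _ _ _ (by simp [voltage]) .nil⟩
  | (i, 3) => ⟨.inr 1,
      .cons' _ (.inl (i, 3)) _ (by simp [spoke]) <|
      .cons' _ (.inl (i, 4)) _ (by simp [voltage]) <|
      .cons' _ (.inl (i, 5)) _ (by simp [voltage]) <|
      .cons' _ (.inl (i + 1, 3)) _ (by simp [voltage]) <|
      .cons' _ _ _ (by simp [spoke]) .nil⟩

/-- The face on one side of each edge of `cage m`. -/
def leftFace : ZMod m × Fin 10 → ZMod m × Fin 4
  | (i, 0) | (i, 1) | (i, 2) | (i, 3) => (i, 0)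
  | (i, 4) | (i, 5) | (i, 6) | (i, 7) => (i, 3)
  | (i, 8) | (i, 9) => (i, 2)

/-- The face on the other side of each edge of `cage m`. -/
def rightFace : ZMod m × Fin 10 → ZMod m × Fin 4
  | (i, 0) => (i - 1, 0)
  | (i, 1) => (i - 1, 2)
  | (i, 2) | (i, 5) | (i, 8) => (i - 1, 1)
  | (i, 3) | (i, 6) => (i, 2)
  | (i, 4) => (i - 1, 3)
  | (i, 7) | (i, 9) => (i, 1)

lemma cageEdge_injective : (cageEdge (m := m)).Injective := by
  rintro ⟨i, k⟩ ⟨j, l⟩ h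
  fin_cases k <;> fin_cases l <;> simp_all [cageEdge]

lemma cageEdge_mem (x : ZMod m × Fin 10) : cageEdge x ∈ (cage m).edgeSet := by
  obtain ⟨i, k⟩ := x
  fin_cases k <;> simp [cageEdge, voltage, spoke]

/-- The edges on the boundary of each face of `cage m`. -/
def faceEdges : ZMod m × Fin 4 → List (ZMod m × Fin 10)
  | (i, 0) => [(i, 0), (i, 1), (i, 2), (i, 3), (i + 1, 0)]
  | (i, 1) => [(i + 1, 2), (i + 1, 8), (i + 1, 5), (i, 7), (i, 9)]
  | (i, 2) => [(i, 3), (i + 1, 1), (i, 9), (i, 6), (i, 8)]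
  | (i, 3) => [(i, 4), (i, 5), (i, 6), (i, 7), (i + 1, 4)]

lemma edges_cageFace (f : ZMod m × Fin 4) :
    (cageFace f).2.edges = (faceEdges f).map cageEdge := by
  obtain ⟨i, k⟩ := f
  fin_cases k <;> simp [cageFace, faceEdges, cageEdge]

lemma walkChain_cageFace (x : ZMod m × Fin 10) (f : ZMod m × Fin 4) :
    walkChain (cageFace f).2 (cageEdge x) =
      Pi.single (M := fun _ => ZMod 2) (leftFace x) 1 f +
        Pi.single (M := fun _ => ZMod 2) (rightFace x) 1 f := by
  rw [walkChain_apply, edges_cageFace, List.count_map_of_injective _ _ cageEdge_injective]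
  obtain ⟨i, k⟩ := x
  obtain ⟨j, l⟩ := f
  fin_cases k <;> fin_cases l <;>
    simp [faceEdges, leftFace, rightFace, List.count_cons, Pi.single_apply,
      eq_sub_iff_add_eq, add_comm]

lemma cage_connected : (cage m).Connected := by
  have h0 (i) : (cage m).Reachable (.inr 0) (.inl (i, 0)) := Adj.reachable rfl
  have h1 (i) : (cage m).Reachable (.inr 0) (.inl (i, 1)) :=
    (h0 i).trans (Adj.reachable (by simp [voltage]))
  have h2 (i) : (cage m).Reachable (.inr 0) (.inl (i, 2)) :=
    (h1 i).trans (Adj.reachable (by simp [voltage]))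
  have h4 (i) : (cage m).Reachable (.inr 0) (.inl (i, 4)) :=
    (h2 i).trans (Adj.reachable (by simp [voltage]))
  have h3 (i) : (cage m).Reachable (.inr 0) (.inl (i, 3)) :=
    (h4 i).trans (Adj.reachable (by simp [voltage]))
  have h5 (i) : (cage m).Reachable (.inr 0) (.inl (i, 5)) :=
    (h4 i).trans (Adj.reachable (by simp [voltage]))
  have hhub : (cage m).Reachable (.inr 0) (.inr 1) := (h3 0).trans (Adj.reachable rfl)
  rw [connected_iff_exists_forall_reachable]
  refine ⟨.inr 0, ?_⟩
  rintro (⟨i, t⟩ | k)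
  · fin_cases t
    exacts [h0 i, h1 i, h2 i, h3 i, h4 i, h5 i]
  · fin_cases k
    exacts [.refl _, hhub]

lemma isCycle_cageFace (hm : 2 ≤ m) : (cageFace ((0 : ZMod m), 0)).2.IsCycle := by
  have : Fact (1 < m) := ⟨hm⟩
  simp [cageFace, Walk.cons_isCycle_iff]

lemma girth_cage (hm : 4 ≤ m) : (cage m).girth = 5 := by
  have hC := isCycle_cageFace (m := m) (by omega)
  refine le_antisymm hC.girth_le_length ?_
  obtain ⟨v, C, hC, hlen⟩ := exists_girth_eq_length.2 fun h => h _ hC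
  exact hlen ▸ five_le_length_of_isCycle (fun _ _ _ => cage_not_adj_of_adj_adj hm)
    (fun _ _ _ _ => cage_eq_or_eq_of_adj hm) hC

lemma isBigirthGraph_cage (hm : 4 ≤ m) : IsBigirthGraph (cage m) 3 m 5 := by
  refine ⟨girth_cage hm, ?_, ⟨.inl (0, 0), degN_cage_inl 0 0⟩, ⟨.inr 0, degN_cage_inr 0⟩⟩
  rintro (⟨i, t⟩ | k)
  exacts [.inl (degN_cage_inl i t), .inr (degN_cage_inr k)]

variable [NeZero m]

lemma ncard_edgeSet_cage : (cage m).edgeSet.ncard = 10 * m := by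
  have h := sum_degN (cage m)
  simp only [Fintype.sum_sum_type, Fintype.sum_prod_type, degN_cage_inl, degN_cage_inr, sum_const,
    card_univ, ZMod.card, Fintype.card_fin, smul_eq_mul] at h
  omega

lemma edgeSet_cage_subset : (cage m).edgeSet ⊆ Set.range cageEdge := by
  refine (Set.eq_of_subset_of_ncard_le (Set.range_subset_iff.2 cageEdge_mem) ?_).ge
  rw [Set.ncard_range_of_injective cageEdge_injective, ncard_edgeSet_cage]
  simp [mul_comm]

lemma eq_of_forall_leftFace_eq_rightFace {α : Type*} {φ : ZMod m × Fin 4 → α}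
    (hφ : ∀ x, φ (leftFace x) = φ (rightFace x)) (f f' : ZMod m × Fin 4) : φ f = φ f' := by
  have hper : Function.Periodic (fun i => φ (i, 0)) 1 := fun i => by
    simpa [leftFace, rightFace] using hφ (i + 1, 0)
  have h0 (i) : φ (i, 0) = φ (0, 0) := by
    simpa using hper.nsmul i.val 0
  have h2 (i) : φ (i, 2) = φ (0, 0) := (hφ (i, 3)).symm.trans (h0 i)
  have h1 (i) : φ (i, 1) = φ (0, 0) := (hφ (i, 9)).symm.trans (h2 i)
  have h3 (i) : φ (i, 3) = φ (0, 0) := (hφ (i, 6)).trans (h2 i)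
  have h : ∀ f, φ f = φ (0, 0) := by
    rintro ⟨i, k⟩
    fin_cases k
    exacts [h0 i, h1 i, h2 i, h3 i]
  rw [h, h f']

lemma isPlanar_cage : (cage m).IsPlanar := by
  refine (IsMacLane.of_faces cage_connected cageFace edgeSet_cage_subset walkChain_cageFace
    (fun _ => eq_of_forall_leftFace_eq_rightFace) ?_).isPlanar
  rw [ncard_edgeSet_cage]
  simp only [Fintype.card_sum, Fintype.card_prod, ZMod.card, Fintype.card_fin]
  omega

end CageFaces

end PlanarCage

/-- For `m ≥ 4` there exists a finite planar `({3,m};5)`-graph on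
`6m+2` vertices, and every finite planar `({3,m};5)`-graph has at least `3m+11`
vertices; hence `3m+11 ≤ n_p({3,m};5) ≤ 6m+2`. -/
theorem planar_three_m_five_bounds (m : ℕ) (hm : 4 ≤ m) :
    (6 * m + 2) ∈ bicageOrders 3 m 5 ∧
      ∀ n ∈ bicageOrders 3 m 5, 3 * m + 11 ≤ n := by
  constructor
  · have : NeZero m := ⟨by omega⟩
    refine ⟨PlanarCage.CageVertex m, inferInstance, PlanarCage.cage m, PlanarCage.isPlanar_cage,
      PlanarCage.isBigirthGraph_cage hm, ?_⟩
    simp [PlanarCage.CageVertex, ZMod.card, mul_comm]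
  · rintro _ ⟨V, _, G, hplanar, hG, rfl⟩
    have := PlanarCage.mul_card_le_of_isPlanar hG hplanar (by omega) (by omega) (by omega)
    omega
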